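/- arXiv:1907.09064 — 5 statements merged into one kernel-verified Lean document; each statement's English description precedes it below -/
import Mathlib

section
/- For every real number a with |a| ≤ 1 and every real number b ≥ 1, it holds that (1+a)^b ≥ e^{ab}(1 - a²b), where (1+a)^b denotes the real power (with 1+a ≥ 0). -/
/-!
The case `b = 1`, `exp a * (1 - a ^ 2) ≤ 1 + a`, follows from
`1 - a ≤ exp (-a)`. Both sides are nonnegative, so it may be raised to the power `b`, and
Bernoulli's inequality bounds `(1 - a ^ 2) ^ b` below by `1 - a ^ 2 * b`.
-/

/-- For every real `a` with `|a| ≤ 1` and every real `b ≥ 1`,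
`(1+a)^b ≥ e^(ab) * (1 - a² b)`, where `^` is the real power. -/
theorem rpow_ge_exp_mul_one_sub_sq_mul (a b : ℝ) (ha : |a| ≤ 1) (hb : b ≥ 1) :
    (1 + a) ^ b ≥ Real.exp (a * b) * (1 - a ^ 2 * b) := by
  obtain ⟨h1, h2⟩ := abs_le.mp ha
  have hsq : 0 ≤ 1 - a ^ 2 := by nlinarith
  -- Multiply `1 - a ≤ exp (-a)` by `exp a * (1 + a) ≥ 0`.
  have hbase : Real.exp a * (1 - a ^ 2) ≤ 1 + a := by
    have h3 : 1 - a ≤ Real.exp (-a) := Real.one_sub_le_exp_neg a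
    have h4 : Real.exp a * Real.exp (-a) = 1 := by rw [← Real.exp_add]; simp
    have h5 : Real.exp a * (1 - a) ≤ 1 :=
      (mul_le_mul_of_nonneg_left h3 (Real.exp_pos a).le).trans_eq h4
    nlinarith [mul_le_mul_of_nonneg_right h5 (by linarith : 0 ≤ 1 + a)]
  -- Bernoulli's inequality for real exponents, at `-a ^ 2 ≥ -1`.
  have hbern : 1 - a ^ 2 * b ≤ (1 - a ^ 2) ^ b := by
    have h := one_add_mul_self_le_rpow_one_add (s := -a ^ 2) (by linarith) hb
    rw [← sub_eq_add_neg] at h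
    linarith
  calc Real.exp (a * b) * (1 - a ^ 2 * b)
      ≤ Real.exp (a * b) * (1 - a ^ 2) ^ b := by gcongr
    _ = (Real.exp a * (1 - a ^ 2)) ^ b := by
        rw [Real.mul_rpow (Real.exp_pos a).le hsq, Real.exp_mul]
    _ ≤ (1 + a) ^ b :=
        Real.rpow_le_rpow (mul_nonneg (Real.exp_pos a).le hsq) hbase (by linarith)
end

section
/- Let m, k, r be natural numbers with 1 ≤ r < m and 1 ≤ k ≤ m. For i = 0,…,k-1 define p_i = 1 - (1 - (k-i)/m)^r. Let ℓ = min(k, ⌊√(m²/r)⌋) and i_min = k - ℓ. Then ∏_{i=0}^{k-1} p_i ≤ min( (1 - (1/ℓ) ∑_{i=i_min}^{k-1} exp(-r(k-i)/m)·(1 - r(k-i)²/m²) )^ℓ , 1 - (1 - 1/m)^r ). -/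
/-!
For `0 ≤ x ≤ 1`, multiplying `1 + x ≤ exp x` by `1 - x` gives `exp (-x) * (1 - x²) ≤ 1 - x`;
taking `r`-th powers and applying Bernoulli's inequality to `(1 - x²) ^ r` yields
`exp (-r x) * (1 - r x²) ≤ (1 - x) ^ r` (`exp_mul_le_one_sub_pow`).

All factors `p i = 1 - (1 - (k - i) / m) ^ r` lie in `[0, 1]`, so the product only grows when it is
restricted to a subset of the indices. Restricting to the last index gives the bound
`1 - (1 - 1 / m) ^ r`. Restricting to the last `ℓ` indices, then applying the AM-GM inequality and
the exponential bound at `x = (k - i) / m`, gives the other one.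
-/

theorem exp_mul_le_one_sub_pow {x : ℝ} (hx0 : 0 ≤ x) (hx1 : x ≤ 1) (r : ℕ) :
    Real.exp (-(r * x)) * (1 - r * x ^ 2) ≤ (1 - x) ^ r := by
  have h1 : Real.exp (-x) * (1 - x ^ 2) ≤ 1 - x := by
    have h2 : 1 - x ^ 2 ≤ Real.exp x * (1 - x) := by
      nlinarith [mul_le_mul_of_nonneg_right (Real.add_one_le_exp x) (sub_nonneg.2 hx1)]
    calc Real.exp (-x) * (1 - x ^ 2) ≤ Real.exp (-x) * (Real.exp x * (1 - x)) := by gcongr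
      _ = 1 - x := by rw [← mul_assoc, ← Real.exp_add]; simp
  have h3 : (0 : ℝ) ≤ 1 - x ^ 2 := by nlinarith
  have h4 : 1 - r * x ^ 2 ≤ (1 - x ^ 2) ^ r := by
    have := one_add_mul_le_pow (a := -x ^ 2) (by nlinarith) r
    calc 1 - r * x ^ 2 = 1 + r * (-x ^ 2) := by ring
      _ ≤ (1 + -x ^ 2) ^ r := this
      _ = _ := by ring
  calc Real.exp (-(r * x)) * (1 - r * x ^ 2)
      ≤ Real.exp (-(r * x)) * (1 - x ^ 2) ^ r := by gcongr
    _ = (Real.exp (-x) * (1 - x ^ 2)) ^ r := by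
        rw [mul_pow, ← Real.exp_nat_mul]; congr 2; ring
    _ ≤ (1 - x) ^ r := by gcongr

theorem prod_le_prod_of_subset_of_mem_unit {ι : Type*} [DecidableEq ι] {s t : Finset ι}
    (hst : s ⊆ t) (p : ι → ℝ) (h0 : ∀ i ∈ t, 0 ≤ p i) (h1 : ∀ i ∈ t, p i ≤ 1) :
    ∏ i ∈ t, p i ≤ ∏ i ∈ s, p i := by
  rw [← Finset.prod_sdiff hst]
  refine mul_le_of_le_one_left (Finset.prod_nonneg fun i hi => h0 i (hst hi)) ?_
  exact Finset.prod_le_one (fun i hi => h0 i (Finset.sdiff_subset hi))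
    (fun i hi => h1 i (Finset.sdiff_subset hi))

/-- The AM-GM inequality with the root moved to the right-hand side as a power. -/
theorem prod_le_mean_pow_card {ι : Type*} {s : Finset ι} (hs : s.card ≠ 0) (p : ι → ℝ)
    (h0 : ∀ i ∈ s, 0 ≤ p i) :
    ∏ i ∈ s, p i ≤ (1 / (s.card : ℝ) * ∑ i ∈ s, p i) ^ s.card := by
  have hc : (s.card : ℝ) ≠ 0 := Nat.cast_ne_zero.2 hs
  have h := Real.geom_mean_le_arith_mean_weighted s (fun _ => 1 / (s.card : ℝ)) p
    (fun _ _ => by positivity) (by simp [hc]) h0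
  rw [← Finset.mul_sum] at h
  have h' := pow_le_pow_left₀
    (Finset.prod_nonneg fun i hi => Real.rpow_nonneg (h0 i hi) _) h s.card
  rw [← Finset.prod_pow] at h'
  refine le_of_eq_of_le (Finset.prod_congr rfl fun i hi => ?_) h'
  rw [one_div, Real.rpow_inv_natCast_pow (h0 i hi) hs]


/-- Lemma 8 of the supplement: with `p_i = 1 - (1 - (k-i)/m)^r`,
`ℓ = min(k, ⌊√(m²/r)⌋)` and `i_min = k - ℓ`,
`∏_{i=0}^{k-1} p_i ≤ min( (1 - (1/ℓ) ∑_{i=i_min}^{k-1} e^{-r(k-i)/m} (1 - r(k-i)²/m²))^ℓ ,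
1 - (1 - 1/m)^r )`. -/
theorem prod_p_le_min_bound (m k r : ℕ) (hr : 1 ≤ r) (hrm : r < m)
    (hk : 1 ≤ k) (hkm : k ≤ m)
    (ℓ : ℕ) (hℓ : ℓ = min k (Nat.floor (Real.sqrt ((m : ℝ) ^ 2 / r))))
    (imin : ℕ) (himin : imin = k - ℓ) :
    ∏ i ∈ Finset.range k, (1 - (1 - ((k : ℝ) - i) / m) ^ r) ≤
      min
        ((1 - (1 / (ℓ : ℝ)) *
            ∑ i ∈ Finset.Ico imin k,
              Real.exp (-((r : ℝ) * ((k : ℝ) - i)) / m) *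
                (1 - (r : ℝ) * ((k : ℝ) - i) ^ 2 / (m : ℝ) ^ 2)) ^ ℓ)
        (1 - (1 - 1 / (m : ℝ)) ^ r) := by
  have hm : (0 : ℝ) < m := by exact_mod_cast (by omega : 0 < m)
  have hr0 : (0 : ℝ) < r := by exact_mod_cast hr
  have hx : ∀ i ∈ Finset.range k, 0 ≤ ((k : ℝ) - i) / m ∧ ((k : ℝ) - i) / m ≤ 1 := by
    intro i hi
    have h1 : (i : ℝ) ≤ k := by exact_mod_cast (Finset.mem_range.1 hi).le
    have h2 : (k : ℝ) ≤ m := by exact_mod_cast hkm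
    have h3 : (0 : ℝ) ≤ i := Nat.cast_nonneg i
    exact ⟨div_nonneg (by linarith) hm.le, (div_le_one hm).2 (by linarith)⟩
  have hp0 : ∀ i ∈ Finset.range k, 0 ≤ 1 - (1 - ((k : ℝ) - i) / m) ^ r := fun i hi =>
    sub_nonneg.2 (pow_le_one₀ (by linarith [(hx i hi).2]) (by linarith [(hx i hi).1]))
  have hp1 : ∀ i ∈ Finset.range k, 1 - (1 - ((k : ℝ) - i) / m) ^ r ≤ 1 := fun i hi =>
    sub_le_self _ (pow_nonneg (by linarith [(hx i hi).2]) r)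
  refine le_min ?_ ?_
  · have hl1 : 1 ≤ ℓ := by
      rw [hℓ]
      -- `ℓ` is positive because `r < m` forces `m² / r ≥ 1`.
      refine le_min hk (Nat.le_floor ?_)
      rw [Nat.cast_one, Real.one_le_sqrt, one_le_div hr0]
      exact_mod_cast (by nlinarith : r ≤ m ^ 2)
    have hlk : ℓ ≤ k := hℓ ▸ min_le_left _ _
    have hcard : (Finset.Ico imin k).card = ℓ := by rw [Nat.card_Ico]; omega
    have hsub : Finset.Ico imin k ⊆ Finset.range k := fun i hi =>
      Finset.mem_range.2 (Finset.mem_Ico.1 hi).2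
    have hl0 : (ℓ : ℝ) ≠ 0 := Nat.cast_ne_zero.2 (by omega)
    have hamgm := prod_le_mean_pow_card (s := Finset.Ico imin k) (by omega)
      (fun i : ℕ => 1 - (1 - ((k : ℝ) - i) / m) ^ r) (fun i hi => hp0 i (hsub hi))
    rw [hcard] at hamgm
    refine (prod_le_prod_of_subset_of_mem_unit hsub _ hp0 hp1).trans (hamgm.trans ?_)
    refine pow_le_pow_left₀ (mul_nonneg (by positivity)
      (Finset.sum_nonneg fun i hi => hp0 i (hsub hi))) ?_ ℓ
    rw [Finset.sum_sub_distrib, Finset.sum_const, hcard, nsmul_eq_mul, mul_one, mul_sub,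
      one_div_mul_cancel hl0]
    refine sub_le_sub_left (mul_le_mul_of_nonneg_left
      (Finset.sum_le_sum fun i hi => ?_) (by positivity)) 1
    have h := exp_mul_le_one_sub_pow (hx i (hsub hi)).1 (hx i (hsub hi)).2 r
    rwa [mul_div_assoc', ← neg_div, div_pow, mul_div_assoc'] at h
  · have hlast : {k - 1} ⊆ Finset.range k := by
      simpa using (by omega : k - 1 < k)
    refine (prod_le_prod_of_subset_of_mem_unit hlast _ hp0 hp1).trans (le_of_eq ?_)
    rw [Finset.prod_singleton, Nat.cast_sub hk]
    simp
end

section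
/- Fix α ∈ (0,1). Let (m_j), (k_j), (r_j) be sequences of natural numbers with k_j → ∞, 1 ≤ k_j < m_j, r_j ≥ 1, and r_j ≤ k_j^{α-1}·m_j for all j. Then lim_{j→∞} ∏_{i=0}^{k_j-1} (1 - (1 - (k_j - i)/m_j)^{r_j}) = 0. -/
/-!
Every factor lies in `[0, 1]`, so the product is at most its last factor, the one with `i = k - 1`.
That factor is `1 - (1 - 1/m)^r`, and Bernoulli's inequality bounds it by `r / m ≤ k ^ (α - 1)`,
which tends to zero because `α < 1`.
-/

open Filter

/-- Theorem 2(i), analytic core: if `r_j ≤ k_j^(α-1) m_j` for a fixed `α ∈ (0,1)`,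
with `k_j → ∞` and `1 ≤ k_j < m_j`, `r_j ≥ 1`, then
`∏_{i=0}^{k_j-1} (1 - (1 - (k_j - i)/m_j)^{r_j}) → 0`. -/
theorem success_prob_tendsto_zero (α : ℝ) (hα : α ∈ Set.Ioo (0 : ℝ) 1)
    (m k r : ℕ → ℕ) (hktop : Tendsto k atTop atTop)
    (hk : ∀ j, 1 ≤ k j) (hkm : ∀ j, k j < m j) (hr : ∀ j, 1 ≤ r j)
    (hrb : ∀ j, (r j : ℝ) ≤ (k j : ℝ) ^ (α - 1) * m j) :
    Tendsto
      (fun j => ∏ i ∈ Finset.range (k j), (1 - (1 - ((k j : ℝ) - i) / m j) ^ r j))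
      atTop (nhds 0) := by
  have hlim : Tendsto (fun j => (k j : ℝ) ^ (α - 1)) atTop (nhds 0) := by
    have h := (tendsto_rpow_neg_atTop (y := 1 - α) (by linarith [hα.2])).comp
      (tendsto_natCast_atTop_atTop.comp hktop)
    simpa [Function.comp_def] using h
  have hfac : ∀ j, ∀ i ∈ Finset.range (k j),
      0 ≤ 1 - (1 - ((k j : ℝ) - i) / m j) ^ r j ∧
        1 - (1 - ((k j : ℝ) - i) / m j) ^ r j ≤ 1 := by
    intro j i hi
    have hik : (i : ℝ) ≤ k j := by exact_mod_cast (Finset.mem_range.1 hi).le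
    have hkm' : (k j : ℝ) < m j := by exact_mod_cast hkm j
    have hi0 : (0 : ℝ) ≤ i := Nat.cast_nonneg i
    have hm : (0 : ℝ) < m j := by linarith
    have h0 : 0 ≤ ((k j : ℝ) - i) / m j := div_nonneg (by linarith) hm.le
    have h1 : ((k j : ℝ) - i) / m j ≤ 1 := (div_le_one hm).2 (by linarith)
    have hle := pow_le_one₀ (n := r j) (sub_nonneg.2 h1) (by linarith)
    have hge := pow_nonneg (sub_nonneg.2 h1) (r j)
    constructor <;> linarith
  refine squeeze_zero (fun j => Finset.prod_nonneg fun i hi => (hfac j i hi).1) (fun j => ?_) hlim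
  obtain ⟨n, hn⟩ : ∃ n, k j = n + 1 := ⟨k j - 1, by have := hk j; omega⟩
  have hmN : 1 ≤ m j := (hk j).trans (hkm j).le
  have hm1 : (1 : ℝ) ≤ m j := by exact_mod_cast hmN
  have hm : (0 : ℝ) < m j := by linarith
  have hinv : 1 / (m j : ℝ) ≤ 1 := (div_le_one hm).2 hm1
  have hbern := one_add_mul_le_pow (a := -(1 / (m j : ℝ))) (by linarith) (r j)
  have hrm : (r j : ℝ) / m j ≤ (k j : ℝ) ^ (α - 1) := (div_le_iff₀ hm).2 (hrb j)
  have hlast : 1 - (1 - ((k j : ℝ) - n) / m j) ^ r j ≤ (k j : ℝ) ^ (α - 1) := by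
    have hkn : (k j : ℝ) - n = 1 := by rw [hn]; push_cast; ring
    rw [hkn, sub_eq_add_neg (1 : ℝ) (1 / (m j : ℝ))]
    have hdiv : (r j : ℝ) * -(1 / (m j : ℝ)) = -((r j : ℝ) / m j) := by ring
    linarith
  have hnmem : n ∈ Finset.range (k j) := Finset.mem_range.2 (by omega)
  rw [← Finset.prod_erase_mul _ _ hnmem]
  refine (mul_le_of_le_one_left (hfac j n hnmem).1 ?_).trans hlast
  exact Finset.prod_le_one (fun i hi => (hfac j i (Finset.mem_of_mem_erase hi)).1)
    fun i hi => (hfac j i (Finset.mem_of_mem_erase hi)).2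
end

section
/- Fix α₁ ∈ (0,1). Let (m_j), (k_j), (r_j) be sequences of natural numbers with m_j → ∞, 1 ≤ k_j ≤ m_j, r_j ≥ 1, and r_j ≤ α₁·m_j for all j. Then lim sup_{j→∞} ∏_{i=0}^{k_j-1} (1 - (1 - (k_j - i)/m_j)^{r_j}) ≤ 1 - e^{-α₁}. -/
/-!
Every factor of the product lies in `[0, 1]`, so the product is at most its last factor
(`i = k - 1`), which is `1 - (1 - 1/m)^r`. Since `exp (1/(m-1)) ≥ 1 + 1/(m-1) = m/(m-1)`, one has
`1 - 1/m ≥ exp (-1/(m-1))`, so with `r ≤ α₁ m` the product is at most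
`1 - exp (-α₁ m/(m-1))`. This tends to `1 - exp (-α₁)` as `m → ∞`.
-/

open Filter

lemma factor_mem_Icc {m k i : ℕ} (r : ℕ) (hkm : k ≤ m) (hi : i < k) :
    1 - (1 - ((k : ℝ) - i) / m) ^ r ∈ Set.Icc (0 : ℝ) 1 := by
  have hm : (0 : ℝ) < m := by exact_mod_cast (by omega : 0 < m)
  have hik : (i : ℝ) ≤ k := by exact_mod_cast hi.le
  have hkm' : (k : ℝ) ≤ m := by exact_mod_cast hkm
  have hi0 : (0 : ℝ) ≤ i := i.cast_nonneg
  have h0 : 0 ≤ ((k : ℝ) - i) / m := div_nonneg (by linarith) hm.le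
  have h1 : ((k : ℝ) - i) / m ≤ 1 := by rw [div_le_one hm]; linarith
  have h2 : (1 - ((k : ℝ) - i) / m) ^ r ≤ 1 := pow_le_one₀ (by linarith) (by linarith)
  have h3 : 0 ≤ (1 - ((k : ℝ) - i) / m) ^ r := pow_nonneg (by linarith) r
  exact ⟨by linarith, by linarith⟩

lemma prod_le_last_factor {m k : ℕ} (r : ℕ) (hk : 1 ≤ k) (hkm : k ≤ m) :
    ∏ i ∈ Finset.range k, (1 - (1 - ((k : ℝ) - i) / m) ^ r) ≤ 1 - (1 - 1 / (m : ℝ)) ^ r := by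
  obtain ⟨n, rfl⟩ := Nat.exists_eq_add_of_le' hk
  have hlast := factor_mem_Icc r hkm (Nat.lt_succ_self n)
  have hprod : ∏ i ∈ Finset.range n, (1 - (1 - (((n + 1 : ℕ) : ℝ) - i) / m) ^ r) ≤ 1 := by
    refine Finset.prod_le_one (fun i hi => ?_) (fun i hi => ?_) <;>
      have := factor_mem_Icc r hkm ((Finset.mem_range.1 hi).trans (Nat.lt_succ_self n))
    exacts [this.1, this.2]
  rw [Finset.prod_range_succ]
  refine (mul_le_of_le_one_left hlast.1 hprod).trans_eq ?_
  push_cast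
  rw [add_sub_cancel_left]

lemma exp_le_one_sub_inv_pow {m r : ℕ} {α : ℝ} (hm : 2 ≤ m) (hr : (r : ℝ) ≤ α * m) :
    Real.exp (-(α * (m / (m - 1)))) ≤ (1 - 1 / (m : ℝ)) ^ r := by
  have hm' : (2 : ℝ) ≤ m := by exact_mod_cast hm
  have hm1 : (0 : ℝ) < (m : ℝ) - 1 := by linarith
  have hbase : Real.exp (-(1 / ((m : ℝ) - 1))) ≤ 1 - 1 / (m : ℝ) := by
    have h := Real.add_one_le_exp (1 / ((m : ℝ) - 1))
    have he : 1 - 1 / (m : ℝ) = (1 / ((m : ℝ) - 1) + 1)⁻¹ := by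
      have : (m : ℝ) ≠ 0 := by linarith
      field_simp
      ring
    rw [Real.exp_neg, he]
    exact inv_anti₀ (by positivity) h
  calc Real.exp (-(α * (m / (m - 1))))
      ≤ Real.exp (r * (-(1 / ((m : ℝ) - 1)))) := by
        apply Real.exp_le_exp.2
        have : (r : ℝ) / (m - 1) ≤ α * m / (m - 1) := by gcongr
        rw [mul_neg, mul_one_div, ← mul_div_assoc]
        linarith
    _ = Real.exp (-(1 / ((m : ℝ) - 1))) ^ r := Real.exp_nat_mul _ _
    _ ≤ _ := by gcongr

/-- Theorem 2(ii), upper-bound half: if `r_j ≤ α₁ m_j` for a fixed `α₁ ∈ (0,1)`,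
with `m_j → ∞`, `1 ≤ k_j ≤ m_j`, `r_j ≥ 1`, then
`limsup_j ∏_{i=0}^{k_j-1} (1 - (1 - (k_j - i)/m_j)^{r_j}) ≤ 1 - e^{-α₁}`. -/
theorem limsup_success_prob_le (α₁ : ℝ) (hα₁ : α₁ ∈ Set.Ioo (0 : ℝ) 1)
    (m k r : ℕ → ℕ) (hmtop : Tendsto m atTop atTop)
    (hk : ∀ j, 1 ≤ k j) (hkm : ∀ j, k j ≤ m j) (hr : ∀ j, 1 ≤ r j)
    (hrb : ∀ j, (r j : ℝ) ≤ α₁ * m j) :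
    Filter.limsup
      (fun j => ∏ i ∈ Finset.range (k j), (1 - (1 - ((k j : ℝ) - i) / m j) ^ r j))
      atTop ≤ 1 - Real.exp (-α₁) := by
  have hlim : Tendsto (fun j => 1 - Real.exp (-(α₁ * ((m j : ℝ) / (m j - 1))))) atTop
      (nhds (1 - Real.exp (-α₁))) := by
    have h1 : Tendsto (fun j => (m j : ℝ) / (m j - 1)) atTop (nhds 1) := by
      have h := (tendsto_natCast_div_add_atTop (𝕜 := ℝ) (-1)).comp hmtop
      simpa [Function.comp_def, sub_eq_add_neg] using h
    have h2 := ((Real.continuous_exp.tendsto _).comp (h1.const_mul α₁).neg).const_sub 1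
    simpa [Function.comp_def] using h2
  rw [← hlim.limsup_eq]
  refine limsup_le_limsup ?_ ?_ hlim.isBoundedUnder_le
  · filter_upwards [hmtop.eventually_ge_atTop 2] with j hj
    have := prod_le_last_factor (r j) (hk j) (hkm j)
    have := exp_le_one_sub_inv_pow hj (hrb j)
    linarith
  -- In `ℝ` the comparison of limsups needs the product to be bounded below.
  · refine IsBoundedUnder.isCoboundedUnder_le (isBoundedUnder_of ⟨0, fun j => ?_⟩)
    exact Finset.prod_nonneg fun i hi =>
      (factor_mem_Icc (r j) (hkm j) (Finset.mem_range.1 hi)).1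
end

section
/- Let n ≥ k ≥ 1 be natural numbers and let A be a random n × k real matrix whose entries are i.i.d. Gaussian with mean 0 and variance 1/n. Define σ_min(A) = inf{‖Ax‖₂ : x ∈ ℝ^k, ‖x‖₂ = 1}. Then for every δ > 0, P( σ_min(A) ≥ 1 - √(k/n) - δ ) ≥ 1 - exp(-δ²·n/2). -/
/-!
Write `G = √n A`, a matrix with independent standard Gaussian entries, and let `γ`, `h ∈ ℝ^n`,
`g ∈ ℝ^k` be further independent standard Gaussians. The claim is that `min_{|u| = 1} |G u|` is
below `√n - √k - t` with probability at most `exp (-t² / 2)`, for `t = δ √n`.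

Gordon's comparison inequality (`gordon_comparison`) for the processes `|G u| + γ` and
`|h| + ⟨g, u⟩` on a finite set of unit vectors, whose infimum is at least `|h| - |g|` for the second
one, gives `E exp (-t (min |G u| + γ)) ≤ E exp (-t |h|) E exp (t |g|)`. It is proved by rotating one
process into the other and integrating by parts; the derivative has a sign by Cauchy–Schwarz.

The norm `χ_d` of a standard Gaussian vector in `ℝ^d` satisfies
`E exp (lam χ_d) ≤ exp (lam E χ_d + lam² / 2)` (`chiInt_ratio_le`): its exponentially tilted laws
have variance at most `1`, by the recurrence for the moments of `r ^ m exp (-r² / 2 + lam r)` and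
Cauchy–Schwarz. As `E exp (-t γ) = exp (t² / 2)`, one of the two factors `exp (t² / 2)` on the right
cancels, and `E exp (-t min |G u|) ≤ exp (-t (E χ_n - E χ_k) + t² / 2)`. Chernoff's bound now gives
the sharp exponent, because `√n - √k ≤ E χ_n - E χ_k` (`sqrt_sub_sqrt_le_chiMean`): the recurrence
`E χ_d E χ_{d+1} = d` together with the asymptotics of `E χ_d` yields a precise upper bound for
`(E χ_d)²`, from which `√d - E χ_d` is seen to decrease.

Finally, the unit sphere is replaced by a countable dense subset, exhausted by finite sets.
-/


open MeasureTheory ProbabilityTheory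

/-- The Euclidean norm of a vector in `ℝ^n`. -/
noncomputable def euclNorm {n : ℕ} (v : Fin n → ℝ) : ℝ :=
  Real.sqrt (∑ i, v i ^ 2)

/-- The smallest singular value: `σ_min(M) = inf {‖Mx‖₂ : ‖x‖₂ = 1}`. -/
noncomputable def sigmaMin {n k : ℕ} (M : Matrix (Fin n) (Fin k) ℝ) : ℝ :=
  sInf {y : ℝ | ∃ x : Fin k → ℝ, euclNorm x = 1 ∧ y = euclNorm (M.mulVec x)}

/-! ### Moments of the chi distribution -/

/-- The chi-type integral `∫₀^∞ r ^ m * exp (-r² / 2 + lam * r) dr`. -/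
noncomputable def chiInt (m : ℕ) (lam : ℝ) : ℝ :=
  ∫ r in Set.Ioi (0 : ℝ), r ^ m * Real.exp (-r ^ 2 / 2 + lam * r)

lemma chiInt_integrableOn (m : ℕ) (lam : ℝ) :
    IntegrableOn (fun r : ℝ => r ^ m * Real.exp (-r ^ 2 / 2 + lam * r)) (Set.Ioi 0) := by
  have h := (integrableOn_rpow_mul_exp_neg_mul_sq (b := 1 / 4) (by norm_num)
    (s := (m : ℝ)) (by have : (0 : ℝ) ≤ m := m.cast_nonneg
                       linarith)).const_mul (Real.exp (lam ^ 2))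
  refine Integrable.mono' h (by fun_prop) ?_
  refine (ae_restrict_iff' measurableSet_Ioi).2 (Filter.Eventually.of_forall fun r hr => ?_)
  have hr' : (0 : ℝ) ≤ r := le_of_lt hr
  rw [Real.norm_of_nonneg (by positivity), Real.rpow_natCast]
  have : Real.exp (-r ^ 2 / 2 + lam * r)
      ≤ Real.exp (lam ^ 2) * Real.exp (-(1 / 4) * r ^ 2) := by
    rw [← Real.exp_add]
    exact Real.exp_le_exp.2 (by nlinarith [sq_nonneg (lam - r / 2)])
  calc r ^ m * Real.exp (-r ^ 2 / 2 + lam * r)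
      ≤ r ^ m * (Real.exp (lam ^ 2) * Real.exp (-(1 / 4) * r ^ 2)) := by gcongr
    _ = _ := by ring

lemma chiInt_pos (m : ℕ) (lam : ℝ) : 0 < chiInt m lam := by
  unfold chiInt
  refine (setIntegral_pos_iff_support_of_nonneg_ae ?_ (chiInt_integrableOn m lam)).2 ?_
  · refine (ae_restrict_iff' measurableSet_Ioi).2 (Filter.Eventually.of_forall fun r hr => ?_)
    have hr' : (0 : ℝ) ≤ r := le_of_lt hr
    simp only [Pi.zero_apply]
    positivity
  · have : Set.Ioi (0 : ℝ) ⊆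
        Function.support (fun r : ℝ => r ^ m * Real.exp (-r ^ 2 / 2 + lam * r)) := by
      intro r hr
      have hr' : (0 : ℝ) < r := hr
      simp only [Function.mem_support]
      positivity
    rw [Set.inter_eq_right.2 this]
    simp

/-- Integration by parts: `r ^ (m + 1) * exp (-r² / 2 + lam * r)` vanishes at `0` and at infinity. -/
lemma chiInt_rec (m : ℕ) (lam : ℝ) :
    chiInt (m + 2) lam = lam * chiInt (m + 1) lam + (m + 1) * chiInt m lam := by
  have i0 := (chiInt_integrableOn m lam).const_mul ((m : ℝ) + 1)
  have i1 := (chiInt_integrableOn (m + 1) lam).const_mul lam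
  have i2 := chiInt_integrableOn (m + 2) lam
  have i3 := chiInt_integrableOn (m + 1) lam
  have hd : ∀ r : ℝ, HasDerivAt (fun r : ℝ => r ^ (m + 1) * Real.exp (-r ^ 2 / 2 + lam * r))
      (((m : ℝ) + 1) * (r ^ m * Real.exp (-r ^ 2 / 2 + lam * r))
        + lam * (r ^ (m + 1) * Real.exp (-r ^ 2 / 2 + lam * r))
        - r ^ (m + 2) * Real.exp (-r ^ 2 / 2 + lam * r)) r := by
    intro r
    have h1 : HasDerivAt (fun r : ℝ => -r ^ 2 / 2 + lam * r) (-r + lam) r := by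
      have := (((hasDerivAt_pow 2 r).neg).div_const 2).add ((hasDerivAt_id r).const_mul lam)
      refine this.congr_deriv ?_
      norm_num
      ring
    refine ((hasDerivAt_pow (m + 1) r).mul h1.exp).congr_deriv ?_
    push_cast
    ring
  have i01 : Integrable (fun r : ℝ => ((m : ℝ) + 1) * (r ^ m * Real.exp (-r ^ 2 / 2 + lam * r))
      + lam * (r ^ (m + 1) * Real.exp (-r ^ 2 / 2 + lam * r)))
      (volume.restrict (Set.Ioi 0)) := i0.add i1
  have hi := i01.sub i2
  have key := integral_Ioi_of_hasDerivAt_of_tendsto' (a := 0) (fun r _ => hd r) hi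
    (tendsto_zero_of_hasDerivAt_of_integrableOn_Ioi (fun r _ => hd r) hi i3)
  simp only [ne_eq, Nat.add_eq_zero_iff, one_ne_zero, and_false, not_false_eq_true, zero_pow,
    zero_mul, sub_zero] at key
  rw [integral_sub i01 i2, integral_add i0 i1, integral_const_mul,
    integral_const_mul] at key
  unfold chiInt
  linarith

/-- The index-zero instance of the recurrence, where the boundary term at `0` is `1`. -/
lemma chiInt_one (lam : ℝ) : chiInt 1 lam = 1 + lam * chiInt 0 lam := by
  have i1 := (chiInt_integrableOn 0 lam).const_mul lam
  have i2 := chiInt_integrableOn 1 lam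
  have i3 := chiInt_integrableOn 0 lam
  have hd : ∀ r : ℝ, HasDerivAt (fun r : ℝ => r ^ 0 * Real.exp (-r ^ 2 / 2 + lam * r))
      (lam * (r ^ 0 * Real.exp (-r ^ 2 / 2 + lam * r))
        - r ^ 1 * Real.exp (-r ^ 2 / 2 + lam * r)) r := by
    intro r
    have h1 : HasDerivAt (fun r : ℝ => -r ^ 2 / 2 + lam * r) (-r + lam) r := by
      have := (((hasDerivAt_pow 2 r).neg).div_const 2).add ((hasDerivAt_id r).const_mul lam)
      refine this.congr_deriv ?_
      norm_num
      ring
    simp only [pow_zero, one_mul]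
    refine (h1.exp).congr_deriv ?_
    ring
  have hi := i1.sub i2
  have key := integral_Ioi_of_hasDerivAt_of_tendsto' (a := 0) (fun r _ => hd r) hi
    (tendsto_zero_of_hasDerivAt_of_integrableOn_Ioi (fun r _ => hd r) hi i3)
  rw [integral_sub i1 i2, integral_const_mul] at key
  simp only [pow_zero, ne_eq, OfNat.ofNat_ne_zero, not_false_eq_true, zero_pow, neg_zero,
    zero_div, mul_zero, add_zero, Real.exp_zero, mul_one, zero_sub] at key
  unfold chiInt
  simp only [pow_zero]
  linarith

/-- Cauchy–Schwarz for consecutive moments. -/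
lemma chiInt_sq_le (m : ℕ) (lam : ℝ) :
    chiInt (m + 1) lam ^ 2 ≤ chiInt m lam * chiInt (m + 2) lam := by
  have h0 := chiInt_pos m lam
  set c := chiInt (m + 1) lam / chiInt m lam with hc
  have i0 := (chiInt_integrableOn m lam).const_mul (c ^ 2)
  have i1 := (chiInt_integrableOn (m + 1) lam).const_mul (2 * c)
  have i2 := chiInt_integrableOn (m + 2) lam
  have hnn : 0 ≤ ∫ r in Set.Ioi (0 : ℝ),
      (r ^ (m + 2) * Real.exp (-r ^ 2 / 2 + lam * r)
        - 2 * c * (r ^ (m + 1) * Real.exp (-r ^ 2 / 2 + lam * r))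
        + c ^ 2 * (r ^ m * Real.exp (-r ^ 2 / 2 + lam * r))) := by
    refine setIntegral_nonneg measurableSet_Ioi fun r hr => ?_
    have hr' : (0 : ℝ) ≤ r := le_of_lt hr
    have : r ^ (m + 2) * Real.exp (-r ^ 2 / 2 + lam * r)
        - 2 * c * (r ^ (m + 1) * Real.exp (-r ^ 2 / 2 + lam * r))
        + c ^ 2 * (r ^ m * Real.exp (-r ^ 2 / 2 + lam * r))
        = r ^ m * (r - c) ^ 2 * Real.exp (-r ^ 2 / 2 + lam * r) := by ring
    rw [this]
    positivity
  have i21 : Integrable (fun r : ℝ => r ^ (m + 2) * Real.exp (-r ^ 2 / 2 + lam * r)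
      - 2 * c * (r ^ (m + 1) * Real.exp (-r ^ 2 / 2 + lam * r)))
      (volume.restrict (Set.Ioi 0)) := i2.sub i1
  rw [integral_add i21 i0, integral_sub i2 i1, integral_const_mul,
    integral_const_mul] at hnn
  change 0 ≤ chiInt (m + 2) lam - 2 * c * chiInt (m + 1) lam + c ^ 2 * chiInt m lam at hnn
  have h2 : c * chiInt m lam = chiInt (m + 1) lam := by
    rw [hc]; field_simp
  nlinarith

lemma chiInt_hasDerivAt (m : ℕ) (lam : ℝ) :
    HasDerivAt (chiInt m) (chiInt (m + 1) lam) lam := by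
  unfold chiInt
  refine (hasDerivAt_integral_of_dominated_loc_of_deriv_le
    (μ := volume.restrict (Set.Ioi (0 : ℝ))) (s := Set.Iio (lam + 1))
    (F := fun l r => r ^ m * Real.exp (-r ^ 2 / 2 + l * r))
    (F' := fun l r => r ^ (m + 1) * Real.exp (-r ^ 2 / 2 + l * r))
    (bound := fun r => r ^ (m + 1) * Real.exp (-r ^ 2 / 2 + (lam + 1) * r))
    (Iio_mem_nhds (by linarith)) (Filter.Eventually.of_forall fun l => by fun_prop)
    (chiInt_integrableOn m lam) (by fun_prop) ?_ (chiInt_integrableOn (m + 1) (lam + 1)) ?_).2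
  · refine (ae_restrict_iff' measurableSet_Ioi).2 (Filter.Eventually.of_forall fun r hr l hl => ?_)
    have hr' : (0 : ℝ) ≤ r := le_of_lt hr
    rw [Real.norm_of_nonneg (by positivity)]
    have : l * r ≤ (lam + 1) * r := mul_le_mul_of_nonneg_right (le_of_lt hl) hr'
    gcongr
  · refine Filter.Eventually.of_forall fun r l _ => ?_
    have h1 : HasDerivAt (fun l : ℝ => -r ^ 2 / 2 + l * r) r l := by
      simpa using ((hasDerivAt_id l).mul_const r).const_add (-r ^ 2 / 2)
    refine (h1.exp.const_mul (r ^ m)).congr_deriv ?_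
    ring

/-- The density `r ^ m * exp (-r² / 2 + lam * r)` has variance at most `1`. -/
lemma chiInt_var_le (m : ℕ) (lam : ℝ) :
    chiInt (m + 2) lam * chiInt m lam - chiInt (m + 1) lam ^ 2 ≤ chiInt m lam ^ 2 := by
  have hr := chiInt_rec m lam
  have h0 := chiInt_pos m lam
  cases m with
  | zero =>
    have h1 := chiInt_one lam
    have h1p := chiInt_pos 1 lam
    simp only [Nat.cast_zero, zero_add] at *
    have : chiInt 1 lam * (chiInt 1 lam - lam * chiInt 0 lam) = chiInt 1 lam := by
      rw [h1]; ring
    rw [hr]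
    nlinarith
  | succ m =>
    have h1 := chiInt_rec m lam
    have hcs := chiInt_sq_le m lam
    have e1 : m + 1 + 1 = m + 2 := rfl
    rw [e1] at *
    have hpos := chiInt_pos (m + 2) lam
    rw [hr]
    push_cast
    have hm : (0 : ℝ) ≤ m + 1 := by positivity
    have e : chiInt (m + 2) lam * (chiInt (m + 2) lam - lam * chiInt (m + 1) lam)
        = (m + 1) * (chiInt m lam * chiInt (m + 2) lam) := by
      rw [show chiInt (m + 2) lam - lam * chiInt (m + 1) lam = (m + 1) * chiInt m lam by linarith]
      ring
    have := mul_le_mul_of_nonneg_left hcs hm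
    nlinarith

/-- The mean `E χ_d` of the Euclidean norm of a standard Gaussian vector in `ℝ^d`, `d ≥ 1`. -/
noncomputable def chiMean (d : ℕ) : ℝ := chiInt d 0 / chiInt (d - 1) 0

/-- The chi distribution is sub-Gaussian around its mean with variance proxy `1`: the logarithm of
its moment generating function minus `lam² / 2` is concave, by `chiInt_var_le`. -/
lemma chiInt_ratio_le (m : ℕ) (lam : ℝ) :
    chiInt m lam / chiInt m 0 ≤ Real.exp (lam * chiMean (m + 1) + lam ^ 2 / 2) := by
  set h : ℝ → ℝ := fun l => Real.log (chiInt m l) - l ^ 2 / 2 with hh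
  set h' : ℝ → ℝ := fun l => chiInt (m + 1) l / chiInt m l - l with hh'
  have hd : ∀ l, HasDerivAt h (h' l) l := by
    intro l
    have := ((chiInt_hasDerivAt m l).log (chiInt_pos m l).ne').sub
      ((hasDerivAt_pow 2 l).div_const 2)
    refine this.congr_deriv ?_
    simp [hh']
  have hd' : ∀ l, HasDerivAt h'
      ((chiInt (m + 2) l * chiInt m l - chiInt (m + 1) l ^ 2) / chiInt m l ^ 2 - 1) l := by
    intro l
    have := ((chiInt_hasDerivAt (m + 1) l).div (chiInt_hasDerivAt m l)
      (chiInt_pos m l).ne').sub (hasDerivAt_id l)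
    refine this.congr_deriv ?_
    ring
  have hanti : Antitone h' := by
    refine antitone_of_hasDerivAt_nonpos hd' fun l => ?_
    have := chiInt_var_le m l
    have hp := chiInt_pos m l
    simp only [Pi.zero_apply]
    rw [sub_nonpos, div_le_one (by positivity)]
    exact this
  have htan : h lam ≤ h 0 + h' 0 * lam := by
    have hcont : Continuous h := continuous_iff_continuousAt.2 fun l => (hd l).continuousAt
    rcases lt_trichotomy lam 0 with hl | hl | hl
    · obtain ⟨c, hc, hc'⟩ := exists_hasDerivAt_eq_slope h h' hl hcont.continuousOn
        (fun l _ => hd l)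
      have := hanti hc.2.le
      rw [hc', le_div_iff₀ (by linarith)] at this
      linarith
    · simp [hl]
    · obtain ⟨c, hc, hc'⟩ := exists_hasDerivAt_eq_slope h h' hl hcont.continuousOn
        (fun l _ => hd l)
      have := hanti hc.1.le
      rw [hc', div_le_iff₀ (by linarith)] at this
      linarith
  rw [← Real.exp_log (div_pos (chiInt_pos m lam) (chiInt_pos m 0)),
    Real.log_div (chiInt_pos m lam).ne' (chiInt_pos m 0).ne', Real.exp_le_exp]
  simp only [hh, hh'] at htan
  simp only [chiMean, Nat.add_sub_cancel]
  linarith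

lemma chiMean_pos (d : ℕ) : 0 < chiMean d := div_pos (chiInt_pos _ _) (chiInt_pos _ _)

/-- The recurrence for the moments at `lam = 0`: `E χ_d * E χ_{d+1} = d`. -/
lemma chiMean_mul (d : ℕ) : chiMean (d + 1) * chiMean (d + 2) = d + 1 := by
  have h0 := (chiInt_pos d 0).ne'
  have h1 := (chiInt_pos (d + 1) 0).ne'
  have hr := chiInt_rec d 0
  simp only [chiMean, Nat.add_sub_cancel, show d + 2 - 1 = d + 1 from rfl]
  rw [hr]
  field_simp
  ring

lemma chiMean_sq_le (d : ℕ) : chiMean (d + 1) ^ 2 ≤ d + 1 := by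
  have h0 := chiInt_pos d 0
  have hc := chiInt_sq_le d 0
  have hr := chiInt_rec d 0
  simp only [chiMean, Nat.add_sub_cancel]
  rw [div_pow, div_le_iff₀ (by positivity)]
  rw [hr] at hc
  nlinarith

/-- An upper bound for `(E χ_d)²`, sharp up to `O(1 / d)`. A coefficient of `1 / d` above `1 / 8`
(the true asymptotic value) is what makes `chiMeanBound_step` hold for large `d`; the coefficient
must stay below `0.17` for the increment of `√d` from `1` to `2` to be controlled. -/
noncomputable def chiMeanBound (d : ℕ) : ℝ := d - 1 / 2 + 3 / (20 * d)

lemma chiMeanBound_pos (d : ℕ) : 0 < chiMeanBound (d + 1) := by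
  unfold chiMeanBound
  have : (0 : ℝ) ≤ d := d.cast_nonneg
  have : 0 < 3 / (20 * ((d + 1 : ℕ) : ℝ)) := by positivity
  push_cast at *
  linarith

/-- Since `E χ_{d+3} / E χ_{d+1} = (d + 2) / (d + 1)`, this says that `(E χ_d)² / chiMeanBound d`
increases when `d` does so by two. -/
lemma chiMeanBound_step (d : ℕ) :
    chiMeanBound (d + 3) * (d + 1) ^ 2 ≤ chiMeanBound (d + 1) * (d + 2) ^ 2 := by
  unfold chiMeanBound
  have hd : (0 : ℝ) ≤ d := d.cast_nonneg
  push_cast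
  rw [← sub_nonneg]
  have : ((d : ℝ) + 1 - 1 / 2 + 3 / (20 * (d + 1))) * (d + 2) ^ 2
      - (d + 3 - 1 / 2 + 3 / (20 * (d + 3))) * (d + 1) ^ 2
      = (2 * (d + 1) ^ 2 - 5 * (d + 1) + 6) / (20 * ((d + 1) * (d + 3))) := by
    field_simp
    ring
  rw [this]
  apply div_nonneg
  · nlinarith [sq_nonneg ((d : ℝ) + 1 - 5 / 4)]
  · positivity

/-- `(E χ_d)² / chiMeanBound d` increases in steps of two and tends to `1`. -/
lemma chiMean_sq_le_bound (d : ℕ) : chiMean (d + 1) ^ 2 ≤ chiMeanBound (d + 1) := by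
  set B : ℕ → ℝ := fun j => chiMean (d + 2 * j + 1) ^ 2 / chiMeanBound (d + 2 * j + 1) with hB
  have hmono : Monotone B := by
    refine monotone_nat_of_le_succ fun j => ?_
    simp only [hB]
    have h1 := chiMean_mul (d + 2 * j)
    have h2 := chiMean_mul (d + 2 * j + 1)
    have hs := chiMeanBound_step (d + 2 * j)
    have e1 : d + 2 * (j + 1) + 1 = d + 2 * j + 3 := by ring
    rw [e1]
    generalize d + 2 * j = e at *
    have p1 := chiMean_pos (e + 1)
    have p2 := chiMean_pos (e + 2)
    have p3 := chiMean_pos (e + 3)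
    have he : (0 : ℝ) ≤ e := e.cast_nonneg
    have e3 : chiMean (e + 3) * (e + 1) = chiMean (e + 1) * (e + 2) := by
      have : e + 1 + 1 = e + 2 := rfl
      have h3 : e + 1 + 2 = e + 3 := rfl
      rw [this, h3] at h2
      push_cast at h2
      have : chiMean (e + 2) * (chiMean (e + 3) * (e + 1) - chiMean (e + 1) * (e + 2)) = 0 := by
        linear_combination ((e : ℝ) + 1) * h2 - ((e : ℝ) + 2) * h1
      rcases mul_eq_zero.1 this with h | h
      · exact absurd h p2.ne'
      · linarith
    have q1 := chiMeanBound_pos e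
    have q3 : 0 < chiMeanBound (e + 3) := chiMeanBound_pos (e + 2)
    rw [div_le_div_iff₀ q1 q3]
    have hsq : chiMean (e + 3) ^ 2 * (e + 1) ^ 2 = chiMean (e + 1) ^ 2 * (e + 2) ^ 2 := by
      rw [← mul_pow, ← mul_pow, e3]
    have hpos : (0 : ℝ) < (e + 1) ^ 2 := by positivity
    refine le_of_mul_le_mul_right ?_ hpos
    calc chiMean (e + 1) ^ 2 * chiMeanBound (e + 3) * (e + 1) ^ 2
        = chiMean (e + 1) ^ 2 * (chiMeanBound (e + 3) * (e + 1) ^ 2) := by ring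
      _ ≤ chiMean (e + 1) ^ 2 * (chiMeanBound (e + 1) * (e + 2) ^ 2) := by gcongr
      _ = chiMean (e + 3) ^ 2 * (e + 1) ^ 2 * chiMeanBound (e + 1) := by rw [hsq]; ring
      _ = _ := by ring
  have hle : ∀ j : ℕ, B 0 ≤ 1 + 1 / ((j : ℝ) + 1) := by
    intro j
    refine (hmono (Nat.zero_le (j + 1))).trans ?_
    simp only [hB]
    have h1 := chiMean_sq_le (d + 2 * (j + 1))
    have hd : (0 : ℝ) ≤ d := d.cast_nonneg
    have hj : (0 : ℝ) ≤ j := j.cast_nonneg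
    have q := chiMeanBound_pos (d + 2 * (j + 1))
    rw [div_le_iff₀ q]
    refine h1.trans ?_
    have hb : (d : ℝ) + 2 * (j + 1) + 1 / 2 ≤ chiMeanBound (d + 2 * (j + 1) + 1) := by
      unfold chiMeanBound
      have : 0 < 3 / (20 * ((d + 2 * (j + 1) + 1 : ℕ) : ℝ)) := by positivity
      push_cast at *
      linarith
    push_cast
    calc (d : ℝ) + 2 * (j + 1) + 1 ≤ (1 + 1 / ((j : ℝ) + 1)) * (d + 2 * (j + 1) + 1 / 2) := by
          have : (1 / ((j : ℝ) + 1)) * (j + 1) = 1 := by field_simp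
          have h4 : 0 < 1 / ((j : ℝ) + 1) := by positivity
          nlinarith [mul_nonneg h4.le hd]
      _ ≤ _ := by gcongr
  have hlim : B 0 ≤ 1 := by
    have ht : Filter.Tendsto (fun j : ℕ => 1 + 1 / ((j : ℝ) + 1)) Filter.atTop (nhds (1 + 0)) :=
      tendsto_const_nhds.add tendsto_one_div_add_atTop_nhds_zero_nat
    rw [add_zero] at ht
    exact ge_of_tendsto' ht hle
  simp only [hB, mul_zero, add_zero] at hlim
  rwa [div_le_one (chiMeanBound_pos d)] at hlim

/-- Write `N = d + 1`, `a = E χ_N` and `b = E χ_{N+1}`. As `a * b = N`, the claim is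
`(√(N + 1) - √N) * a ≤ N - a ^ 2`, which the upper bound on `a ^ 2` gives. -/
lemma sqrt_sub_chiMean_step (d : ℕ) :
    √((d + 2 : ℕ) : ℝ) - √((d + 1 : ℕ) : ℝ) ≤ chiMean (d + 2) - chiMean (d + 1) := by
  have hm := chiMean_mul d
  have hb := chiMean_sq_le_bound d
  have hp := chiMean_pos (d + 1)
  generalize chiMean (d + 1) = a at *
  generalize chiMean (d + 2) = b at *
  unfold chiMeanBound at hb
  have hN : (1 : ℝ) ≤ ((d + 1 : ℕ) : ℝ) := by push_cast; linarith [(Nat.cast_nonneg d : (0:ℝ) ≤ d)]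
  have e2 : ((d + 2 : ℕ) : ℝ) = ((d + 1 : ℕ) : ℝ) + 1 := by push_cast; ring
  have e1 : (d : ℝ) + 1 = ((d + 1 : ℕ) : ℝ) := by push_cast; ring
  rw [e1] at hm
  rw [e2]
  generalize ((d + 1 : ℕ) : ℝ) = N at *
  set s := √(N + 1) + √N with hs
  have hs0 : 0 < s := by positivity
  have hsq1 : √(N + 1) ^ 2 = N + 1 := Real.sq_sqrt (by linarith)
  have hsq0 : √N ^ 2 = N := Real.sq_sqrt (by linarith)
  have hdiff : (√(N + 1) - √N) * s = 1 := by
    linear_combination hsq1 - hsq0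
  have hprod : N + 1 / 2 - 1 / (8 * N) ≤ √(N + 1) * √N := by
    rw [← Real.sqrt_mul (by linarith)]
    apply Real.le_sqrt_of_sq_le
    have : (N + 1) * N - (N + 1 / 2 - 1 / (8 * N)) ^ 2 = (8 * N - 1) / (64 * N ^ 2) := by
      field_simp
      ring
    have : 0 ≤ (8 * N - 1) / (64 * N ^ 2) := div_nonneg (by linarith) (by positivity)
    linarith
  have hssq : 4 * N + 2 - 1 / (4 * N) ≤ s ^ 2 := by
    have : s ^ 2 = 2 * N + 1 + 2 * (√(N + 1) * √N) := by
      linear_combination hsq1 + hsq0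
    rw [this]
    have : 1 / (4 * N) = 2 * (1 / (8 * N)) := by field_simp; norm_num
    linarith
  have hc : 0 ≤ 1 / 2 - 3 / (20 * N) := by
    rw [sub_nonneg, div_le_div_iff₀ (by positivity) (by norm_num)]; linarith
  have hmain : a ^ 2 ≤ ((1 / 2 - 3 / (20 * N)) * s) ^ 2 := by
    refine hb.trans ?_
    rw [mul_pow]
    refine le_trans ?_ (mul_le_mul_of_nonneg_left hssq (sq_nonneg _))
    rw [← sub_nonneg]
    have : (1 / 2 - 3 / (20 * N)) ^ 2 * (4 * N + 2 - 1 / (4 * N)) - (N - 1 / 2 + 3 / (20 * N))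
        = (640 * N ^ 3 - 676 * N ^ 2 + 132 * N - 9) / (1600 * N ^ 3) := by
      field_simp
      ring
    rw [this]
    apply div_nonneg _ (by positivity)
    nlinarith [mul_nonneg (sub_nonneg.2 hN) (sub_nonneg.2 hN),
      mul_nonneg (mul_nonneg (sub_nonneg.2 hN) (sub_nonneg.2 hN)) (sub_nonneg.2 hN)]
  have ha : a ≤ (1 / 2 - 3 / (20 * N)) * s :=
    (pow_le_pow_iff_left₀ hp.le (by positivity) (by norm_num)).1 hmain
  have hkey : (√(N + 1) - √N) * a ≤ N - a ^ 2 := by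
    have hpos : 0 ≤ √(N + 1) - √N := sub_nonneg.2 (Real.sqrt_le_sqrt (by linarith))
    calc (√(N + 1) - √N) * a ≤ (√(N + 1) - √N) * ((1 / 2 - 3 / (20 * N)) * s) := by gcongr
      _ = 1 / 2 - 3 / (20 * N) := by linear_combination (1 / 2 - 3 / (20 * N)) * hdiff
      _ ≤ _ := by linarith
  refine le_of_mul_le_mul_right ?_ hp
  calc (√(N + 1) - √N) * a ≤ N - a ^ 2 := hkey
    _ = (b - a) * a := by linear_combination -hm

/-- `√d - E χ_d` is nonincreasing in `d ≥ 1`. -/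
lemma sqrt_sub_sqrt_le_chiMean {n k : ℕ} (hk : 1 ≤ k) (hkn : k ≤ n) :
    √(n : ℝ) - √(k : ℝ) ≤ chiMean n - chiMean k := by
  induction n, hkn using Nat.le_induction with
  | base => simp
  | succ n hn ih =>
    obtain ⟨d, rfl⟩ : ∃ d, n = d + 1 := ⟨n - 1, by omega⟩
    have := sqrt_sub_chiMean_step d
    have e : d + 1 + 1 = d + 2 := rfl
    rw [e]
    linarith

/-! ### Standard Gaussian vectors -/

/-- The standard Gaussian measure on `ι → ℝ`. -/
noncomputable def stdG (ι : Type*) [Fintype ι] : Measure (ι → ℝ) :=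
  Measure.pi fun _ => gaussianReal 0 1

instance (ι : Type*) [Fintype ι] : IsProbabilityMeasure (stdG ι) := by
  unfold stdG; infer_instance

/-- The density of `stdG ι` with respect to Lebesgue measure. -/
noncomputable def stdGDensity {ι : Type*} [Fintype ι] (x : ι → ℝ) : ℝ :=
  (√(2 * Real.pi))⁻¹ ^ Fintype.card ι * Real.exp (-(∑ i, x i ^ 2) / 2)

lemma stdGDensity_pos {ι : Type*} [Fintype ι] (x : ι → ℝ) : 0 < stdGDensity x := by
  have := Real.pi_pos
  unfold stdGDensity
  positivity

lemma continuous_stdGDensity {ι : Type*} [Fintype ι] :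
    Continuous (stdGDensity : (ι → ℝ) → ℝ) := by
  unfold stdGDensity
  fun_prop

lemma stdGDensity_eq_prod {ι : Type*} [Fintype ι] (x : ι → ℝ) :
    stdGDensity x = ∏ i, gaussianPDFReal 0 1 (x i) := by
  simp only [gaussianPDFReal, stdGDensity, Finset.prod_mul_distrib, Finset.prod_const,
    Finset.card_univ, ← Real.exp_sum, NNReal.coe_one, mul_one, sub_zero]
  rw [← Finset.sum_div, Finset.sum_neg_distrib]

lemma stdG_eq_withDensity (ι : Type*) [Fintype ι] :
    stdG ι = (volume : Measure (ι → ℝ)).withDensity fun x => ENNReal.ofReal (stdGDensity x) := by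
  unfold stdG
  refine Measure.pi_eq fun s hs => ?_
  rw [withDensity_apply _ (MeasurableSet.univ_pi hs), volume_pi, Measure.restrict_pi_pi]
  simp_rw [stdGDensity_eq_prod]
  rw [← ofReal_integral_eq_lintegral_ofReal]
  · rw [integral_fintype_prod_eq_prod, ENNReal.ofReal_prod_of_nonneg]
    · exact Finset.prod_congr rfl fun i _ =>
        (gaussianReal_apply_eq_integral 0 one_ne_zero (s i)).symm
    · exact fun i _ => integral_nonneg fun x => gaussianPDFReal_nonneg _ _ _
  · exact Integrable.fintype_prod fun i => (integrable_gaussianPDFReal 0 1).integrableOn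
  · exact Filter.Eventually.of_forall fun x =>
      Finset.prod_nonneg fun i _ => gaussianPDFReal_nonneg _ _ _

lemma integral_stdG {ι : Type*} [Fintype ι] (f : (ι → ℝ) → ℝ) :
    ∫ x, f x ∂stdG ι = ∫ x, f x * stdGDensity x := by
  rw [stdG_eq_withDensity, integral_withDensity_eq_integral_toReal_smul
    (by have := (continuous_stdGDensity (ι := ι)).measurable; fun_prop) (by simp)]
  refine integral_congr_ae (Filter.Eventually.of_forall fun x => ?_)
  simp only [ENNReal.toReal_ofReal (stdGDensity_pos x).le, smul_eq_mul]
  ring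

lemma integrable_stdG_iff {ι : Type*} [Fintype ι] (f : (ι → ℝ) → ℝ) :
    Integrable f (stdG ι) ↔ Integrable fun x => f x * stdGDensity x := by
  rw [stdG_eq_withDensity, integrable_withDensity_iff
    (by have := (continuous_stdGDensity (ι := ι)).measurable; fun_prop) (by simp)]
  refine integrable_congr (Filter.Eventually.of_forall fun x => ?_)
  simp only [ENNReal.toReal_ofReal (stdGDensity_pos x).le]

lemma integrable_dotProduct_stdG {ι : Type*} [Fintype ι] (p : ι → ℝ) :
    Integrable (fun x => p ⬝ᵥ x) (stdG ι) := by
  unfold dotProduct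
  refine integrable_finsetSum _ fun i _ => Integrable.const_mul ?_ _
  have h : Integrable (fun y : ℝ => y) (gaussianReal 0 1) :=
    (memLp_id_gaussianReal (μ := 0) (v := 1) 1).integrable le_rfl
  exact (measurePreserving_eval (fun _ : ι => gaussianReal 0 1) i).integrable_comp_of_integrable h

/-- Gaussian integration by parts in the direction `p`: `E[⟨p, x⟩ H] = E[∂_p H]`. -/
lemma stdG_ibp {ι : Type*} [Fintype ι] (p : ι → ℝ) {H H' : (ι → ℝ) → ℝ}
    (hd : ∀ x, HasLineDerivAt ℝ H (H' x) x p) (hH : Integrable H (stdG ι))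
    (hH' : Integrable H' (stdG ι)) (hHp : Integrable (fun x => H x * (p ⬝ᵥ x)) (stdG ι)) :
    ∫ x, H x * (p ⬝ᵥ x) ∂stdG ι = ∫ x, H' x ∂stdG ι := by
  rw [integrable_stdG_iff] at hH hH' hHp
  rw [integral_stdG, integral_stdG]
  have hg : ∀ x : ι → ℝ,
      HasLineDerivAt ℝ stdGDensity (-(p ⬝ᵥ x) * stdGDensity x) x p := by
    intro x
    unfold HasLineDerivAt stdGDensity
    have h1 : HasDerivAt (fun t : ℝ => -(∑ i, (x + t • p) i ^ 2) / 2) (-(p ⬝ᵥ x)) 0 := by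
      have : ∀ i ∈ Finset.univ,
          HasDerivAt (fun t : ℝ => (x + t • p) i ^ 2) (2 * (p i * x i)) 0 := by
        intro i _
        have h0 : HasDerivAt (fun t : ℝ => (x + t • p) i) (p i) 0 := by
          simpa using ((hasDerivAt_id (0 : ℝ)).mul_const (p i)).const_add (x i)
        refine (h0.pow 2).congr_deriv ?_
        simp
        ring
      refine ((HasDerivAt.fun_sum this).neg.div_const 2).congr_deriv ?_
      simp only [dotProduct, ← Finset.mul_sum]
      ring
    refine (h1.exp.const_mul _).congr_deriv ?_
    simp
    ring
  have := integral_bilinear_hasLineDerivAt_right_eq_neg_left_of_integrable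
    (μ := (volume : Measure (ι → ℝ))) (f := H) (f' := H') (g := stdGDensity)
    (g' := fun x => -(p ⬝ᵥ x) * stdGDensity x) (v := p) (B := ContinuousLinearMap.mul ℝ ℝ)
    (by simpa using hH') (by
      have := hHp.neg
      refine this.congr (Filter.Eventually.of_forall fun x => ?_)
      simp
      ring) (by simpa using hH) (fun x _ => hd x) (fun x _ => hg x)
  simp only [ContinuousLinearMap.mul_apply'] at this
  rw [← neg_inj, ← this, ← integral_neg]
  refine integral_congr_ae (Filter.Eventually.of_forall fun x => ?_)
  ring

lemma euclNorm_eq_norm {d : ℕ} (x : EuclideanSpace ℝ (Fin d)) :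
    euclNorm (x : Fin d → ℝ) = ‖x‖ := by
  simp [euclNorm, EuclideanSpace.norm_eq]

lemma integral_stdG_eq {d : ℕ} (f : ℝ → ℝ) :
    ∫ x : Fin d → ℝ, f (euclNorm x) * stdGDensity x
      = (√(2 * Real.pi))⁻¹ ^ d *
        ∫ x : EuclideanSpace ℝ (Fin d), f ‖x‖ * Real.exp (-‖x‖ ^ 2 / 2) := by
  have hv := EuclideanSpace.volume_preserving_symm_measurableEquiv_toLp (Fin d)
  rw [← hv.integral_comp (MeasurableEquiv.measurableEmbedding _), ← integral_const_mul]
  refine integral_congr_ae (Filter.Eventually.of_forall fun x => ?_)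
  have h1 : ∑ i, x i ^ 2 = ‖x‖ ^ 2 := by simp [EuclideanSpace.norm_sq_eq]
  have h2 : ((MeasurableEquiv.toLp 2 (Fin d → ℝ)).symm x : Fin d → ℝ) = x := rfl
  simp only [h2, euclNorm_eq_norm, stdGDensity, h1, Fintype.card_fin]
  ring

/-- Polar coordinates: the moment generating function of `χ_d`. -/
lemma integral_exp_euclNorm {d : ℕ} (hd : 1 ≤ d) (lam : ℝ) :
    ∫ x : Fin d → ℝ, Real.exp (lam * euclNorm x) ∂stdG (Fin d)
      = chiInt (d - 1) lam / chiInt (d - 1) 0 := by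
  have : Nonempty (Fin d) := ⟨⟨0, hd⟩⟩
  have key : ∃ c : ℝ, ∀ l : ℝ, ∫ x : Fin d → ℝ, Real.exp (l * euclNorm x) ∂stdG (Fin d)
      = c * chiInt (d - 1) l := by
    refine ⟨(√(2 * Real.pi))⁻¹ ^ d * (d * (volume : Measure (EuclideanSpace ℝ (Fin d))).real
      (Metric.ball 0 1)), fun l => ?_⟩
    rw [integral_stdG, integral_stdG_eq fun r => Real.exp (l * r)]
    have := integral_fun_norm_addHaar (volume : Measure (EuclideanSpace ℝ (Fin d)))
      fun r => Real.exp (l * r) * Real.exp (-r ^ 2 / 2)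
    rw [this]
    simp only [finrank_euclideanSpace, Fintype.card_fin, smul_eq_mul, nsmul_eq_mul, chiInt]
    rw [mul_assoc, mul_assoc]
    congr 3
    refine integral_congr_ae (Filter.Eventually.of_forall fun r => ?_)
    simp only
    rw [← Real.exp_add, add_comm]
  obtain ⟨c, hc⟩ := key
  -- the constant `c` is found from the total mass, at `lam = 0`
  have h0 := hc 0
  have hp := chiInt_pos (d - 1) 0
  simp only [zero_mul, Real.exp_zero, integral_const, probReal_univ, smul_eq_mul, mul_one] at h0
  rw [hc, eq_div_iff hp.ne']
  linear_combination -chiInt (d - 1) lam * h0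

lemma continuous_euclNorm {d : ℕ} : Continuous (euclNorm : (Fin d → ℝ) → ℝ) := by
  unfold euclNorm
  fun_prop

/-- The moment generating function of `χ_d`, as an extended nonnegative integral. -/
lemma lintegral_exp_euclNorm_le {d : ℕ} (hd : 1 ≤ d) (lam : ℝ) :
    ∫⁻ x : Fin d → ℝ, ENNReal.ofReal (Real.exp (lam * euclNorm x)) ∂stdG (Fin d)
      ≤ ENNReal.ofReal (Real.exp (lam * chiMean d + lam ^ 2 / 2)) := by
  have hpos : 0 < chiInt (d - 1) lam / chiInt (d - 1) 0 :=
    div_pos (chiInt_pos _ _) (chiInt_pos _ _)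
  -- a non-integrable function would have Bochner integral `0`, but this one is positive
  have hint : Integrable (fun x : Fin d → ℝ => Real.exp (lam * euclNorm x)) (stdG (Fin d)) := by
    by_contra h
    have := integral_exp_euclNorm hd lam
    rw [integral_undef h] at this
    linarith
  rw [← ofReal_integral_eq_lintegral_ofReal hint
    (Filter.Eventually.of_forall fun x => (Real.exp_pos _).le), integral_exp_euclNorm hd]
  refine ENNReal.ofReal_le_ofReal ?_
  have := chiInt_ratio_le (d - 1) lam
  rwa [Nat.sub_add_cancel hd] at this

/-! ### Gordon's comparison inequality -/

/-- The smoothed functional `√(ε² + |y|²) + s` of `(y, s) ∈ ℝ^n × ℝ`; the coordinates of `y` are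
indexed by `some i` and `s` is the coordinate `none`. -/
noncomputable def gordonFun {n : ℕ} (ε : ℝ) (w : Option (Fin n) → ℝ) : ℝ :=
  √(ε ^ 2 + ∑ i, w (some i) ^ 2) + w none

/-- The gradient of `gordonFun`. -/
noncomputable def gordonGrad {n : ℕ} (ε : ℝ) (w : Option (Fin n) → ℝ) : Option (Fin n) → ℝ
  | none => 1
  | some i => w (some i) / √(ε ^ 2 + ∑ i, w (some i) ^ 2)

/-- The sign by which the two Gaussian processes differ in covariance: `1` on the real coordinate,
`-1` on the `ℝ^n` coordinates. -/
def gordonSign {n : ℕ} : Option (Fin n) → ℝ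
  | none => 1
  | some _ => -1

lemma gordon_radicand_pos {n : ℕ} {ε : ℝ} (hε : 0 < ε) (w : Option (Fin n) → ℝ) :
    0 < ε ^ 2 + ∑ i, w (some i) ^ 2 := by
  have : 0 ≤ ∑ i, w (some i) ^ 2 := Finset.sum_nonneg fun i _ => sq_nonneg _
  positivity

lemma continuous_gordonFun {n : ℕ} (ε : ℝ) :
    Continuous (gordonFun ε : (Option (Fin n) → ℝ) → ℝ) := by
  unfold gordonFun
  fun_prop

lemma continuous_gordonGrad {n : ℕ} {ε : ℝ} (hε : 0 < ε) (c : Option (Fin n)) :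
    Continuous fun w : Option (Fin n) → ℝ => gordonGrad ε w c := by
  cases c with
  | none => exact continuous_const
  | some i =>
    unfold gordonGrad
    exact (by fun_prop : Continuous fun w : Option (Fin n) → ℝ => w (some i)).div
      (by fun_prop) fun w => (Real.sqrt_pos.2 (gordon_radicand_pos hε w)).ne'

lemma hasDerivAt_gordonFun {n : ℕ} {ε : ℝ} (hε : 0 < ε) {w : ℝ → Option (Fin n) → ℝ}
    {w' : Option (Fin n) → ℝ} {t : ℝ} (hw : ∀ c, HasDerivAt (fun s => w s c) (w' c) t) :
    HasDerivAt (fun s => gordonFun ε (w s)) (∑ c, gordonGrad ε (w t) c * w' c) t := by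
  have h1 : HasDerivAt (fun s => ε ^ 2 + ∑ i, w s (some i) ^ 2)
      (∑ i, 2 * (w t (some i) * w' (some i))) t := by
    refine (HasDerivAt.fun_sum fun i _ => ?_).const_add _
    refine ((hw (some i)).pow 2).congr_deriv ?_
    simp
    ring
  refine ((h1.sqrt (gordon_radicand_pos hε _).ne').add (hw none)).congr_deriv ?_
  have hp := Real.sqrt_pos.2 (gordon_radicand_pos hε (w t))
  rw [Fintype.sum_option, add_comm]
  simp only [gordonGrad, one_mul]
  congr 1
  rw [Finset.sum_div]
  refine Finset.sum_congr rfl fun i _ => ?_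
  field_simp

lemma abs_gordonGrad_le {n : ℕ} {ε : ℝ} (hε : 0 < ε) (w : Option (Fin n) → ℝ)
    (c : Option (Fin n)) : |gordonGrad ε w c| ≤ 1 := by
  cases c with
  | none => simp [gordonGrad]
  | some i =>
    have hp := Real.sqrt_pos.2 (gordon_radicand_pos hε w)
    simp only [gordonGrad]
    rw [abs_div, abs_of_pos hp, div_le_one hp]
    apply Real.abs_le_sqrt
    have := Finset.single_le_sum (f := fun i => w (some i) ^ 2) (fun i _ => sq_nonneg _)
      (Finset.mem_univ i)
    nlinarith [sq_nonneg ε]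

/-- Cauchy–Schwarz for the two gradients: their `ℝ^n` parts have norm at most `1`. -/
lemma gordonGrad_sum_nonneg {n : ℕ} {ε : ℝ} (hε : 0 < ε) (w v : Option (Fin n) → ℝ) :
    0 ≤ ∑ c, gordonSign c * (gordonGrad ε w c * gordonGrad ε v c) := by
  have hw := Real.sqrt_pos.2 (gordon_radicand_pos hε w)
  have hv := Real.sqrt_pos.2 (gordon_radicand_pos hε v)
  have hcs := Real.sum_mul_le_sqrt_mul_sqrt Finset.univ (fun i => w (some i)) fun i => v (some i)
  have h1 : √(∑ i, w (some i) ^ 2) ≤ √(ε ^ 2 + ∑ i, w (some i) ^ 2) :=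
    Real.sqrt_le_sqrt (by nlinarith [sq_nonneg ε])
  have h2 : √(∑ i, v (some i) ^ 2) ≤ √(ε ^ 2 + ∑ i, v (some i) ^ 2) :=
    Real.sqrt_le_sqrt (by nlinarith [sq_nonneg ε])
  have h3 := hcs.trans (mul_le_mul h1 h2 (Real.sqrt_nonneg _) hw.le)
  rw [Fintype.sum_option]
  simp only [gordonSign, gordonGrad]
  have : ∑ i, (-1 : ℝ) * (w (some i) / √(ε ^ 2 + ∑ i, w (some i) ^ 2)
      * (v (some i) / √(ε ^ 2 + ∑ i, v (some i) ^ 2)))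
      = -((∑ i, w (some i) * v (some i))
        / (√(ε ^ 2 + ∑ i, w (some i) ^ 2) * √(ε ^ 2 + ∑ i, v (some i) ^ 2))) := by
    rw [Finset.sum_div, ← Finset.sum_neg_distrib]
    refine Finset.sum_congr rfl fun i _ => ?_
    rw [div_mul_div_comm]
    ring
  rw [this]
  have : (∑ i, w (some i) * v (some i))
        / (√(ε ^ 2 + ∑ i, w (some i) ^ 2) * √(ε ^ 2 + ∑ i, v (some i) ^ 2)) ≤ 1 := by
    rw [div_le_one (by positivity)]
    exact h3
  linarith

/-- **Gordon's comparison inequality**, in the form needed here. The two families of Gaussian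
vectors `(a j c ⬝ᵥ x)_c` and `(b j c ⬝ᵥ x)_c` are independent, have the same law for each fixed
`j`, and for `j ≠ l` their cross-covariances differ by `κ j l` times the diagonal matrix of signs.
Along the rotation `sin θ • a + cos θ • b`, the derivative of the expectation is computed by
integrating by parts; it is a sum over pairs `j ≠ l` of nonnegative terms, by Cauchy–Schwarz for
the gradients. Since `κ j j = 0`, second derivatives of `φ` and of `gordonFun` never occur. -/
theorem gordon_comparison {ι J : Type*} [Fintype ι] [Fintype J] [DecidableEq J] {n : ℕ}
    {ε : ℝ} (hε : 0 < ε) (a b : J → Option (Fin n) → ι → ℝ) (κ : J → J → ℝ)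
    (hκ : ∀ j l, 0 ≤ κ j l) (hκ0 : ∀ j, κ j j = 0)
    (hab : ∀ j l c d, a j c ⬝ᵥ b l d = 0)
    (hK : ∀ j l c d, a j c ⬝ᵥ a l d - b j c ⬝ᵥ b l d
      = if c = d then κ j l * gordonSign c else 0)
    {φ φ' : ℝ → ℝ} (hφ : ∀ x, HasDerivAt φ (φ' x) x) (hφ'c : Continuous φ')
    (hφ0 : ∀ x, 0 ≤ φ x) (hφ1 : ∀ x, φ x ≤ 1) (hφ'0 : ∀ x, 0 ≤ φ' x)
    {M : ℝ} (hφ'M : ∀ x, φ' x ≤ M) :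
    ∫ x, ∏ j, φ (gordonFun ε fun c => b j c ⬝ᵥ x) ∂stdG ι
      ≤ ∫ x, ∏ j, φ (gordonFun ε fun c => a j c ⬝ᵥ x) ∂stdG ι := by
  classical
  have hM : 0 ≤ M := (hφ'0 0).trans (hφ'M 0)
  have hφc : Continuous φ := continuous_iff_continuousAt.2 fun x => (hφ x).continuousAt
  set W : ℝ → (ι → ℝ) → J → Option (Fin n) → ℝ := fun θ x j c =>
    Real.sin θ * (a j c ⬝ᵥ x) + Real.cos θ * (b j c ⬝ᵥ x) with hW
  set p : ℝ → J → Option (Fin n) → ι → ℝ := fun θ j c =>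
    Real.cos θ • a j c - Real.sin θ • b j c with hp
  have hpx : ∀ θ j c x, p θ j c ⬝ᵥ x
      = Real.cos θ * (a j c ⬝ᵥ x) - Real.sin θ * (b j c ⬝ᵥ x) := by
    intro θ j c x
    simp only [hp, sub_dotProduct, smul_dotProduct, smul_eq_mul]
  have hdot : ∀ v : ι → ℝ, Continuous fun x : ι → ℝ => v ⬝ᵥ x := by
    intro v; unfold dotProduct; fun_prop
  have hWc : ∀ θ j, Continuous fun x => W θ x j := by
    intro θ j
    refine continuous_pi fun c => ?_
    exact ((hdot _).const_mul _).add ((hdot _).const_mul _)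
  have hrc : ∀ θ j, Continuous fun x => gordonFun ε (W θ x j) := fun θ j =>
    (continuous_gordonFun ε).comp (hWc θ j)
  have hqc : ∀ θ j c, Continuous fun x => gordonGrad ε (W θ x j) c := fun θ j c =>
    (continuous_gordonGrad hε c).comp (hWc θ j)
  have hφrc : ∀ θ j, Continuous fun x => φ (gordonFun ε (W θ x j)) := fun θ j =>
    hφc.comp (hrc θ j)
  have hφ'rc : ∀ θ j, Continuous fun x => φ' (gordonFun ε (W θ x j)) := fun θ j =>
    hφ'c.comp (hrc θ j)
  have hprod : ∀ (s : Finset J) (θ : ℝ) x, |∏ l ∈ s, φ (gordonFun ε (W θ x l))| ≤ 1 := by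
    intro s θ x
    rw [abs_of_nonneg (Finset.prod_nonneg fun _ _ => hφ0 _)]
    exact Finset.prod_le_one (fun _ _ => hφ0 _) fun _ _ => hφ1 _
  have hprodc : ∀ (s : Finset J) (θ : ℝ),
      Continuous fun x => ∏ l ∈ s, φ (gordonFun ε (W θ x l)) := fun s θ =>
    continuous_finsetProd _ fun l _ => hφrc θ l
  have hφ'abs : ∀ y, |φ' y| ≤ M := fun y => by rw [abs_of_nonneg (hφ'0 y)]; exact hφ'M y
  set H : ℝ → J → Option (Fin n) → (ι → ℝ) → ℝ := fun θ j c x =>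
    (∏ l ∈ Finset.univ.erase j, φ (gordonFun ε (W θ x l)))
      * (φ' (gordonFun ε (W θ x j)) * gordonGrad ε (W θ x j) c) with hH
  have hHc : ∀ θ j c, Continuous (H θ j c) := fun θ j c =>
    (hprodc _ θ).mul ((hφ'rc θ j).mul (hqc θ j c))
  have hHM : ∀ θ j c x, |H θ j c x| ≤ M := by
    intro θ j c x
    simp only [hH]
    rw [abs_mul, abs_mul]
    calc _ ≤ 1 * (M * 1) := by
          gcongr
          · exact hprod _ _ _
          · exact hφ'abs _
          · exact abs_gordonGrad_le hε _ _
      _ = M := by ring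
  -- the derivative of the integrand in `θ`
  have hF : ∀ x θ, HasDerivAt (fun θ => ∏ j, φ (gordonFun ε (W θ x j)))
      (∑ j, ∑ c, H θ j c x * (p θ j c ⬝ᵥ x)) θ := by
    intro x θ
    have h1 : ∀ j ∈ Finset.univ, HasDerivAt (fun θ => φ (gordonFun ε (W θ x j)))
        (φ' (gordonFun ε (W θ x j)) * ∑ c, gordonGrad ε (W θ x j) c * (p θ j c ⬝ᵥ x)) θ := by
      intro j _
      refine (hφ _).comp θ (hasDerivAt_gordonFun hε fun c => ?_)
      refine (((Real.hasDerivAt_sin θ).mul_const _).add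
        ((Real.hasDerivAt_cos θ).mul_const _)).congr_deriv ?_
      rw [hpx]
      ring
    refine (HasDerivAt.fun_finsetProd h1).congr_deriv ?_
    refine Finset.sum_congr rfl fun j _ => ?_
    simp only [hH, smul_eq_mul, Finset.mul_sum]
    refine Finset.sum_congr rfl fun c _ => ?_
    ring
  set bd : (ι → ℝ) → ℝ := fun x => ∑ j, ∑ c, M * (|a j c ⬝ᵥ x| + |b j c ⬝ᵥ x|) with hbd
  have hbdi : Integrable bd (stdG ι) :=
    integrable_finsetSum _ fun j _ => integrable_finsetSum _ fun c _ =>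
      ((integrable_dotProduct_stdG _).abs.add (integrable_dotProduct_stdG _).abs).const_mul _
  have hΦ : ∀ θ, HasDerivAt (fun θ => ∫ x, ∏ j, φ (gordonFun ε (W θ x j)) ∂stdG ι)
      (∫ x, ∑ j, ∑ c, H θ j c x * (p θ j c ⬝ᵥ x) ∂stdG ι) θ := by
    intro θ
    refine (hasDerivAt_integral_of_dominated_loc_of_deriv_le (s := Set.univ) (bound := bd)
      (F := fun θ x => ∏ j, φ (gordonFun ε (W θ x j)))
      (F' := fun θ x => ∑ j, ∑ c, H θ j c x * (p θ j c ⬝ᵥ x))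
      Filter.univ_mem (Filter.Eventually.of_forall fun θ => (hprodc _ θ).aestronglyMeasurable)
      (Integrable.of_bound (hprodc _ θ).aestronglyMeasurable 1
        (Filter.Eventually.of_forall fun x => hprod _ θ x))
      (Continuous.aestronglyMeasurable (continuous_finsetSum _ fun j _ =>
        continuous_finsetSum _ fun c _ => (hHc θ j c).mul (hdot _)))
      (Filter.Eventually.of_forall fun x θ _ => ?_) hbdi
      (Filter.Eventually.of_forall fun x θ _ => hF x θ)).2
    rw [Real.norm_eq_abs]
    refine (Finset.abs_sum_le_sum_abs _ _).trans (Finset.sum_le_sum fun j _ => ?_)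
    refine (Finset.abs_sum_le_sum_abs _ _).trans (Finset.sum_le_sum fun c _ => ?_)
    rw [abs_mul, hpx]
    refine mul_le_mul (hHM _ _ _ _) ?_ (abs_nonneg _) hM
    refine (abs_sub _ _).trans ?_
    rw [abs_mul, abs_mul]
    exact add_le_add (mul_le_of_le_one_left (abs_nonneg _) (Real.abs_cos_le_one θ))
      (mul_le_of_le_one_left (abs_nonneg _) (Real.abs_sin_le_one θ))
  -- moving `x` in the direction `p θ j c` moves only the coordinate `c` of each `W θ x l`
  have hshift : ∀ θ j c x t l d, W θ (x + t • p θ j c) l d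
      = W θ x l d + t * (Real.sin θ * Real.cos θ
          * (if d = c then κ l j * gordonSign d else 0)) := by
    intro θ j c x t l d
    rw [← hK l j d c]
    have h1 : b l d ⬝ᵥ a j c = 0 := by rw [dotProduct_comm]; exact hab _ _ _ _
    simp only [hW, hp, dotProduct_add, dotProduct_smul, dotProduct_sub, smul_eq_mul, h1, hab]
    ring
  set H' : ℝ → J → Option (Fin n) → (ι → ℝ) → ℝ := fun θ j c x =>
    (∑ l ∈ Finset.univ.erase j, (∏ m ∈ (Finset.univ.erase j).erase l,
        φ (gordonFun ε (W θ x m))) * (φ' (gordonFun ε (W θ x l))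
          * (gordonGrad ε (W θ x l) c * (Real.sin θ * Real.cos θ * (κ l j * gordonSign c)))))
      * (φ' (gordonFun ε (W θ x j)) * gordonGrad ε (W θ x j) c) with hH'
  have hH'c : ∀ θ j c, Continuous (H' θ j c) := fun θ j c =>
    (continuous_finsetSum _ fun l _ => (hprodc _ θ).mul
      ((hφ'rc θ l).mul ((hqc θ l c).mul continuous_const))).mul ((hφ'rc θ j).mul (hqc θ j c))
  have hH'i : ∀ θ j c, Integrable (H' θ j c) (stdG ι) := by
    intro θ j c
    refine Integrable.of_bound (hH'c θ j c).aestronglyMeasurable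
      ((∑ l ∈ Finset.univ.erase j,
        1 * (M * (1 * |Real.sin θ * Real.cos θ * (κ l j * gordonSign c)|))) * (M * 1))
      (Filter.Eventually.of_forall fun x => ?_)
    rw [Real.norm_eq_abs]
    simp only [hH']
    rw [abs_mul, abs_mul]
    refine mul_le_mul ?_ (mul_le_mul (hφ'abs _) (abs_gordonGrad_le hε _ _) (abs_nonneg _) hM)
      (by positivity) (by positivity)
    refine (Finset.abs_sum_le_sum_abs _ _).trans (Finset.sum_le_sum fun l _ => ?_)
    rw [abs_mul, abs_mul, abs_mul]
    gcongr
    · exact hprod _ _ _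
    · exact hφ'abs _
    · exact abs_gordonGrad_le hε _ _
  have hline : ∀ θ j c x, HasLineDerivAt ℝ (H θ j c) (H' θ j c x) x (p θ j c) := by
    intro θ j c x
    unfold HasLineDerivAt
    have hconst : ∀ t : ℝ, W θ (x + t • p θ j c) j = W θ x j := by
      intro t
      ext d
      rw [hshift, hκ0]
      simp
    simp only [hH, hconst]
    refine HasDerivAt.mul_const ?_ _
    have h1 : ∀ l ∈ Finset.univ.erase j,
        HasDerivAt (fun t : ℝ => φ (gordonFun ε (W θ (x + t • p θ j c) l)))
          (φ' (gordonFun ε (W θ x l)) * (gordonGrad ε (W θ x l) c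
            * (Real.sin θ * Real.cos θ * (κ l j * gordonSign c)))) 0 := by
      intro l _
      have h2 := hasDerivAt_gordonFun (t := 0) hε (w := fun t : ℝ => W θ (x + t • p θ j c) l)
        (w' := fun d => Real.sin θ * Real.cos θ * (if d = c then κ l j * gordonSign d else 0))
        (fun d => by
          simp only [hshift]
          simpa using ((hasDerivAt_id (0 : ℝ)).mul_const (Real.sin θ * Real.cos θ
            * (if d = c then κ l j * gordonSign d else 0))).const_add (W θ x l d))
      have h3 := (hφ _).comp (0 : ℝ) h2
      refine h3.congr_deriv ?_
      simp
    refine (HasDerivAt.fun_finsetProd h1).congr_deriv ?_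
    simp [smul_eq_mul]
  have hHp : ∀ θ j c, Integrable (fun x => H θ j c x * (p θ j c ⬝ᵥ x)) (stdG ι) := by
    intro θ j c
    exact (integrable_dotProduct_stdG _).bdd_mul (c := M) (hHc θ j c).aestronglyMeasurable
      (Filter.Eventually.of_forall fun x => hHM θ j c x)
  have hderiv_nonneg : ∀ θ, 0 ≤ Real.sin θ → 0 ≤ Real.cos θ →
      0 ≤ ∫ x, ∑ j, ∑ c, H θ j c x * (p θ j c ⬝ᵥ x) ∂stdG ι := by
    intro θ hs hc
    rw [integral_finsetSum _ fun j _ => integrable_finsetSum _ fun c _ => hHp θ j c]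
    have : ∀ j, ∫ x, ∑ c, H θ j c x * (p θ j c ⬝ᵥ x) ∂stdG ι = ∫ x, ∑ c, H' θ j c x ∂stdG ι := by
      intro j
      rw [integral_finsetSum _ fun c _ => hHp θ j c, integral_finsetSum _ fun c _ => hH'i θ j c]
      refine Finset.sum_congr rfl fun c _ => ?_
      exact stdG_ibp (p θ j c) (hline θ j c)
        (Integrable.of_bound (hHc θ j c).aestronglyMeasurable M
          (Filter.Eventually.of_forall fun x => hHM θ j c x)) (hH'i θ j c) (hHp θ j c)
    refine Finset.sum_nonneg fun j _ => ?_
    rw [this]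
    refine integral_nonneg fun x => ?_
    have hrw : ∑ c, H' θ j c x = ∑ l ∈ Finset.univ.erase j,
        (∏ m ∈ (Finset.univ.erase j).erase l, φ (gordonFun ε (W θ x m)))
          * φ' (gordonFun ε (W θ x l)) * φ' (gordonFun ε (W θ x j))
          * (Real.sin θ * Real.cos θ * κ l j)
          * ∑ c, gordonSign c * (gordonGrad ε (W θ x l) c * gordonGrad ε (W θ x j) c) := by
      simp only [hH', Finset.sum_mul, Finset.mul_sum]
      rw [Finset.sum_comm]
      refine Finset.sum_congr rfl fun l _ => Finset.sum_congr rfl fun c _ => ?_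
      ring
    simp only [Pi.zero_apply]
    rw [hrw]
    refine Finset.sum_nonneg fun l _ => ?_
    have h1 := gordonGrad_sum_nonneg hε (W θ x l) (W θ x j)
    have h2 : 0 ≤ ∏ m ∈ (Finset.univ.erase j).erase l, φ (gordonFun ε (W θ x m)) :=
      Finset.prod_nonneg fun _ _ => hφ0 _
    have h3 := hφ'0 (gordonFun ε (W θ x l))
    have h4 := hφ'0 (gordonFun ε (W θ x j))
    have h5 := hκ l j
    positivity
  have hpi : (0 : ℝ) < Real.pi / 2 := by positivity
  obtain ⟨θ, hθ, hslope⟩ := exists_hasDerivAt_eq_slope _ _ hpi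
    (continuous_iff_continuousAt.2 fun θ => (hΦ θ).continuousAt).continuousOn (fun θ _ => hΦ θ)
  have h0 := hderiv_nonneg θ (Real.sin_nonneg_of_nonneg_of_le_pi hθ.1.le (by linarith [hθ.2]))
    (Real.cos_nonneg_of_neg_pi_div_two_le_of_le (by linarith [hθ.1]) hθ.2.le)
  rw [hslope, sub_zero] at h0
  have h1 := mul_nonneg h0 hpi.le
  rw [div_mul_cancel₀ _ hpi.ne', sub_nonneg] at h1
  simpa [hW] using h1

/-! ### Comparison for the norms of a Gaussian matrix -/

/-- A smooth monotone cutoff, rising from `0` to `1` on `[α, α + ε]`. -/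
lemma exists_cutoff (α : ℝ) {ε : ℝ} (hε : 0 < ε) : ∃ φ φ' : ℝ → ℝ, ∃ M : ℝ,
    (∀ x, HasDerivAt φ (φ' x) x) ∧ Continuous φ' ∧ (∀ x, 0 ≤ φ x) ∧ (∀ x, φ x ≤ 1) ∧
      (∀ x, 0 ≤ φ' x) ∧ (∀ x, φ' x ≤ M) ∧ (∀ x ≤ α, φ x = 0) ∧ ∀ x, α + ε ≤ x → φ x = 1 := by
  have hc : ContDiff ℝ 1 Real.smoothTransition := Real.smoothTransition.contDiff (n := 1)
  have hd : Continuous (deriv Real.smoothTransition) := hc.continuous_deriv le_rfl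
  have hda : ∀ x, HasDerivAt Real.smoothTransition (deriv Real.smoothTransition x) x := fun x =>
    (hc.differentiable (by norm_num) x).hasDerivAt
  obtain ⟨M, hM⟩ := (isCompact_Icc (a := (0 : ℝ)) (b := 1)).exists_bound_of_continuousOn
    hd.continuousOn
  have hbound : ∀ x, deriv Real.smoothTransition x ≤ max M 0 := by
    intro x
    rcases lt_or_ge x 0 with h | h
    · have : Real.smoothTransition =ᶠ[nhds x] fun _ => 0 := by
        filter_upwards [gt_mem_nhds h] with y hy using Real.smoothTransition.zero_of_nonpos hy.le
      simp [this.deriv_eq]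
    rcases lt_or_ge 1 x with h' | h'
    · have : Real.smoothTransition =ᶠ[nhds x] fun _ => 1 := by
        filter_upwards [lt_mem_nhds h'] with y hy using Real.smoothTransition.one_of_one_le hy.le
      simp [this.deriv_eq]
    · exact (le_abs_self _).trans ((hM x ⟨h, h'⟩).trans (le_max_left _ _))
  refine ⟨fun x => Real.smoothTransition ((x - α) / ε),
    fun x => deriv Real.smoothTransition ((x - α) / ε) * (1 / ε), max M 0 * (1 / ε),
    fun x => ?_, by fun_prop, fun x => Real.smoothTransition.nonneg _,
    fun x => Real.smoothTransition.le_one _, fun x => ?_, fun x => ?_, fun x hx => ?_,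
    fun x hx => ?_⟩
  · exact (hda _).comp x (((hasDerivAt_id x).sub_const α).div_const ε)
  · have := Real.smoothTransition.monotone.deriv_nonneg (x := (x - α) / ε)
    positivity
  · exact mul_le_mul_of_nonneg_right (hbound _) (by positivity)
  · exact Real.smoothTransition.zero_of_nonpos (div_nonpos_of_nonpos_of_nonneg (by linarith) hε.le)
  · exact Real.smoothTransition.one_of_one_le ((one_le_div hε).2 (by linarith))

lemma abs_le_sqrt_add {s ε : ℝ} (hs : 0 ≤ s) (hε : 0 < ε) :
    √s ≤ √(ε ^ 2 + s) ∧ √(ε ^ 2 + s) ≤ √s + ε := by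
  refine ⟨Real.sqrt_le_sqrt (by nlinarith), ?_⟩
  rw [Real.sqrt_le_left (by positivity)]
  nlinarith [Real.sq_sqrt hs, mul_nonneg (Real.sqrt_nonneg s) hε.le]

/-- Index set of the Gaussian coordinates: the entries of the matrix, one extra variable, and the
coordinates of two vectors in `ℝ^n` and `ℝ^k`. -/
abbrev GordonIdx (n k : ℕ) : Type := (Fin n × Fin k ⊕ Unit) ⊕ (Fin n ⊕ Fin k)

/-- The `n × k` matrix with entries `x (i, j)`. -/
def matOf {n k : ℕ} (x : Fin n × Fin k → ℝ) : Matrix (Fin n) (Fin k) ℝ :=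
  Matrix.of fun i j => x (i, j)

lemma neg_euclNorm_le_dotProduct {k : ℕ} {u : Fin k → ℝ} (hu : euclNorm u = 1) (g : Fin k → ℝ) :
    -euclNorm g ≤ u ⬝ᵥ g := by
  have h := Real.sum_mul_le_sqrt_mul_sqrt Finset.univ (fun i => -u i) g
  simp only [neg_sq, neg_mul, Finset.sum_neg_distrib] at h
  change -(u ⬝ᵥ g) ≤ euclNorm u * euclNorm g at h
  rw [hu] at h
  linarith

lemma dotProduct_le_one {k : ℕ} {u v : Fin k → ℝ} (hu : euclNorm u = 1) (hv : euclNorm v = 1) :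
    u ⬝ᵥ v ≤ 1 := by
  have h : u ⬝ᵥ v ≤ euclNorm u * euclNorm v :=
    Real.sum_mul_le_sqrt_mul_sqrt Finset.univ u v
  simpa [hu, hv] using h

lemma dotProduct_self_eq_one {k : ℕ} {u : Fin k → ℝ} (hu : euclNorm u = 1) : u ⬝ᵥ u = 1 := by
  have : u ⬝ᵥ u = ∑ i, u i ^ 2 := by simp [dotProduct, sq]
  rw [this]
  have h := Real.sq_sqrt (Finset.sum_nonneg fun i (_ : i ∈ Finset.univ) => sq_nonneg (u i))
  rw [show √(∑ i, u i ^ 2) = 1 from hu] at h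
  linarith

/-- The comparison between `min_j |G u_j| + γ` and `|h| - |g|` in distribution, up to `2ε`. Gordon's
inequality compares the vectors `(G u_j, γ)` with `(h, ⟨g, u_j⟩)`: for unit vectors both have
covariance the identity, and for `j ≠ l` the cross-covariances `⟨u_j, u_l⟩ • 1 ⊕ 1` and
`1 ⊕ ⟨u_j, u_l⟩` differ by `1 - ⟨u_j, u_l⟩ ≥ 0` times the signs. -/
lemma gordon_prob_le {n k : ℕ} {J : Type*} [Fintype J] (u : J → Fin k → ℝ)
    (hu : ∀ j, euclNorm (u j) = 1) {ε : ℝ} (hε : 0 < ε) (α : ℝ) :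
    stdG (GordonIdx n k) {x | ∃ j, euclNorm ((matOf fun p => x (.inl (.inl p))).mulVec (u j))
        + x (.inl (.inr ())) ≤ α}
      ≤ stdG (GordonIdx n k) {x | euclNorm (fun i => x (.inr (.inl i)))
        - euclNorm (fun i => x (.inr (.inr i))) < α + 2 * ε} := by
  classical
  obtain ⟨φ, φ', M, h1, h2, h3, h4, h5, h6, h7, h8⟩ := exists_cutoff (α + ε) hε
  let a : J → Option (Fin n) → GordonIdx n k → ℝ := fun j c => match c with
    | some i => Sum.elim (Sum.elim (fun p => if p.1 = i then u j p.2 else 0) 0) 0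
    | none => Sum.elim (Sum.elim 0 1) 0
  let b : J → Option (Fin n) → GordonIdx n k → ℝ := fun j c => match c with
    | some i => Sum.elim 0 (Sum.elim (fun p => if p = i then 1 else 0) 0)
    | none => Sum.elim 0 (Sum.elim 0 (u j))
  have hcmp := gordon_comparison hε a b (fun j l => 1 - u j ⬝ᵥ u l)
    (fun j l => sub_nonneg.2 (dotProduct_le_one (hu j) (hu l)))
    (fun j => by simp [dotProduct_self_eq_one (hu j)])
    (fun j l c d => by cases c <;> cases d <;> simp [a, b, dotProduct])
    (fun j l c d => by
      cases c <;> cases d <;>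
        simp [a, b, dotProduct, gordonSign, Fintype.sum_prod_type]
      split_ifs <;> simp_all)
    h1 h2 h3 h4 h5 h6
  have ha : ∀ j x, gordonFun ε (fun c => a j c ⬝ᵥ x)
      = √(ε ^ 2 + ∑ i, ((matOf fun p => x (.inl (.inl p))).mulVec (u j)) i ^ 2)
        + x (.inl (.inr ())) := by
    intro j x
    simp [gordonFun, a, dotProduct, Fintype.sum_prod_type, Matrix.mulVec, matOf, mul_comm]
  have hb : ∀ j x, gordonFun ε (fun c => b j c ⬝ᵥ x)
      = √(ε ^ 2 + ∑ i, x (.inr (.inl i)) ^ 2) + u j ⬝ᵥ fun i => x (.inr (.inr i)) := by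
    intro j x
    simp [gordonFun, b, dotProduct]
  have hφc : Continuous φ := continuous_iff_continuousAt.2 fun x => (h1 x).continuousAt
  set E1 : Set (GordonIdx n k → ℝ) := {x | ∃ j,
    euclNorm ((matOf fun p => x (.inl (.inl p))).mulVec (u j)) + x (.inl (.inr ())) ≤ α} with hE1
  set E2 : Set (GordonIdx n k → ℝ) := {x | euclNorm (fun i => x (.inr (.inl i)))
        - euclNorm (fun i => x (.inr (.inr i))) < α + 2 * ε} with hE2
  have hE1m : MeasurableSet E1 := by
    rw [hE1, Set.ofPred_exists]
    refine MeasurableSet.iUnion fun j => (isClosed_le ?_ continuous_const).measurableSet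
    refine (continuous_euclNorm.comp ?_).add (by fun_prop)
    unfold Matrix.mulVec matOf dotProduct
    simp only [Matrix.of_apply]
    fun_prop
  have hE2m : MeasurableSet E2 := by
    refine (isOpen_lt (Continuous.sub ?_ ?_) continuous_const).measurableSet
    · exact continuous_euclNorm.comp (by fun_prop)
    · exact continuous_euclNorm.comp (by fun_prop)
  have hgc : ∀ v : J → Option (Fin n) → GordonIdx n k → ℝ,
      Integrable (fun x => ∏ j, φ (gordonFun ε fun c => v j c ⬝ᵥ x)) (stdG (GordonIdx n k)) := by
    intro v
    have hcont : Continuous fun x => ∏ j, φ (gordonFun ε fun c => v j c ⬝ᵥ x) := by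
      refine continuous_finsetProd _ fun j _ => hφc.comp ((continuous_gordonFun ε).comp ?_)
      unfold dotProduct
      fun_prop
    refine Integrable.of_bound hcont.aestronglyMeasurable 1 (Filter.Eventually.of_forall fun x => ?_)
    rw [Real.norm_eq_abs, abs_of_nonneg (Finset.prod_nonneg fun _ _ => h3 _)]
    exact Finset.prod_le_one (fun _ _ => h3 _) fun _ _ => h4 _
  have hA : ∫ x, ∏ j, φ (gordonFun ε fun c => a j c ⬝ᵥ x) ∂stdG (GordonIdx n k)
      ≤ (stdG (GordonIdx n k)).real E1ᶜ := by
    rw [← integral_indicator_one hE1m.compl]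
    refine integral_mono (hgc a) ((integrable_const 1).indicator hE1m.compl) fun x => ?_
    by_cases hx : x ∈ E1
    · obtain ⟨j, hj⟩ := hx
      have : φ (gordonFun ε fun c => a j c ⬝ᵥ x) = 0 := by
        refine h7 _ ?_
        rw [ha]
        have := (abs_le_sqrt_add (s := ∑ i, ((matOf fun p => x (.inl (.inl p))).mulVec (u j)) i ^ 2)
          (Finset.sum_nonneg fun _ _ => sq_nonneg _) hε).2
        unfold euclNorm at hj
        linarith
      refine (Finset.prod_eq_zero (f := fun j => φ (gordonFun ε fun c => a j c ⬝ᵥ x))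
        (Finset.mem_univ j) this).trans_le ?_
      exact Set.indicator_nonneg (fun _ _ => zero_le_one) _
    · rw [Set.indicator_of_mem (by exact hx)]
      exact Finset.prod_le_one (fun _ _ => h3 _) fun _ _ => h4 _
  have hB : (stdG (GordonIdx n k)).real E2ᶜ
      ≤ ∫ x, ∏ j, φ (gordonFun ε fun c => b j c ⬝ᵥ x) ∂stdG (GordonIdx n k) := by
    rw [← integral_indicator_one hE2m.compl]
    refine integral_mono ((integrable_const 1).indicator hE2m.compl) (hgc b) fun x => ?_
    by_cases hx : x ∈ E2
    · rw [Set.indicator_of_notMem (by simpa using hx)]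
      exact Finset.prod_nonneg fun _ _ => h3 _
    · rw [Set.indicator_of_mem (by exact hx)]
      have : ∀ j, φ (gordonFun ε fun c => b j c ⬝ᵥ x) = 1 := by
        intro j
        refine h8 _ ?_
        rw [hb]
        have e1 := (abs_le_sqrt_add (s := ∑ i, x (.inr (.inl i)) ^ 2)
          (Finset.sum_nonneg fun _ _ => sq_nonneg _) hε).1
        have e2 := neg_euclNorm_le_dotProduct (hu j) fun i => x (.inr (.inr i))
        have e3 : α + 2 * ε ≤ euclNorm (fun i => x (.inr (.inl i)))
          - euclNorm (fun i => x (.inr (.inr i))) := not_lt.1 hx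
        have e4 : euclNorm (fun i => x (.inr (.inl i))) = √(∑ i, x (.inr (.inl i)) ^ 2) := rfl
        linarith
      simp [this]
  have := hB.trans (hcmp.trans hA)
  rw [probReal_compl_eq_one_sub hE1m, probReal_compl_eq_one_sub hE2m] at this
  rw [← ENNReal.toReal_le_toReal (measure_ne_top _ _) (measure_ne_top _ _)]
  change (stdG _).real E1 ≤ (stdG _).real E2
  linarith

/-- A comparison of distribution functions gives a comparison of exponential moments. -/
lemma lintegral_exp_le_of_prob_le {Ω : Type*} [MeasurableSpace Ω] (μ : Measure Ω) {X Y : Ω → ℝ}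
    (hX : Measurable X) (hY : Measurable Y) {lam c : ℝ} (hlam : 0 < lam)
    (h : ∀ α, μ {x | X x ≤ α} ≤ μ {x | Y x < α + c}) :
    ∫⁻ x, ENNReal.ofReal (Real.exp (-lam * X x)) ∂μ
      ≤ ENNReal.ofReal (Real.exp (lam * c))
        * ∫⁻ x, ENNReal.ofReal (Real.exp (-lam * Y x)) ∂μ := by
  rw [← lintegral_const_mul _ (by fun_prop)]
  simp_rw [← ENNReal.ofReal_mul (Real.exp_pos _).le, ← Real.exp_add]
  rw [lintegral_eq_lintegral_meas_le μ (Filter.Eventually.of_forall fun x => (Real.exp_pos _).le)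
    (by fun_prop), lintegral_eq_lintegral_meas_lt μ
    (Filter.Eventually.of_forall fun x => (Real.exp_pos _).le) (by fun_prop)]
  refine setLIntegral_mono' measurableSet_Ioi fun t ht => ?_
  have ht : 0 < t := ht
  refine (measure_mono fun x hx => ?_).trans ((h (-Real.log t / lam)).trans
    (measure_mono fun x hx => ?_))
  · have hx : t ≤ Real.exp (-lam * X x) := hx
    rw [← Real.log_le_iff_le_exp ht] at hx
    change X x ≤ _
    rw [le_div_iff₀ hlam]
    linarith
  · have hx : Y x < -Real.log t / lam + c := hx
    change t < Real.exp _
    rw [← Real.log_lt_iff_lt_exp ht]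
    rw [← sub_lt_iff_lt_add, lt_div_iff₀ hlam] at hx
    linarith

/-- Coordinates indexed by the two summands are independent. -/
lemma lintegral_stdG_sum {ι κ : Type*} [Fintype ι] [Fintype κ] {f : (ι → ℝ) → ENNReal}
    {g : (κ → ℝ) → ENNReal} (hf : Measurable f) (hg : Measurable g) :
    ∫⁻ x, f (fun i => x (.inl i)) * g (fun i => x (.inr i)) ∂stdG (ι ⊕ κ)
      = (∫⁻ x, f x ∂stdG ι) * ∫⁻ x, g x ∂stdG κ := by
  have h := measurePreserving_sumPiEquivProdPi (fun _ : ι ⊕ κ => gaussianReal 0 1)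
  have h2 := lintegral_prod_mul (μ := stdG ι) (ν := stdG κ) hf.aemeasurable hg.aemeasurable
  rw [← h2]
  exact h.lintegral_comp (f := fun z : (ι → ℝ) × (κ → ℝ) => f z.1 * g z.2)
    (by fun_prop)

lemma lintegral_exp_unit (lam : ℝ) :
    ∫⁻ x : Unit → ℝ, ENNReal.ofReal (Real.exp (lam * x ())) ∂stdG Unit
      = ENNReal.ofReal (Real.exp (lam ^ 2 / 2)) := by
  have h := measurePreserving_eval (fun _ : Unit => gaussianReal 0 1) ()
  have h2 := h.lintegral_comp (f := fun y => ENNReal.ofReal (Real.exp (lam * y))) (by fun_prop)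
  refine h2.trans ?_
  rw [← ofReal_integral_eq_lintegral_ofReal (integrable_exp_mul_gaussianReal lam)
    (Filter.Eventually.of_forall fun x => (Real.exp_pos _).le)]
  have h3 := congrFun (mgf_fun_id_gaussianReal (μ := 0) (v := 1)) lam
  rw [mgf] at h3
  rw [h3]
  simp

/-! ### Tail bound -/

lemma continuous_euclNorm_matOf {n k : ℕ} (v : Fin k → ℝ) :
    Continuous fun x : Fin n × Fin k → ℝ => euclNorm ((matOf x).mulVec v) := by
  refine continuous_euclNorm.comp ?_
  unfold Matrix.mulVec matOf dotProduct
  simp only [Matrix.of_apply]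
  fun_prop

/-- Chernoff's bound for the minimum of `|G u|` over finitely many unit vectors `u`. The factor
`exp (t ^ 2 / 2)` contributed by the extra Gaussian variable offsets one of the two such factors
coming from the norms of the Gaussian vectors in `ℝ^n` and `ℝ^k`. -/
lemma tail_finite {n k : ℕ} (hk : 1 ≤ k) (hkn : k ≤ n) {t : ℝ} (ht : 0 < t) {J : Type*}
    [Fintype J] (u : J → Fin k → ℝ) (hu : ∀ j, euclNorm (u j) = 1) :
    stdG (Fin n × Fin k) {x | ∃ j, euclNorm ((matOf x).mulVec (u j)) < √n - √k - t}
      ≤ ENNReal.ofReal (Real.exp (-(t ^ 2 / 2))) := by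
  rcases isEmpty_or_nonempty J with hJ | hJ
  · simp
  set A : ℝ := √n - √k - t with hA
  let X0 : (Fin n × Fin k → ℝ) → ℝ := fun x =>
    Finset.univ.inf' Finset.univ_nonempty fun j => euclNorm ((matOf x).mulVec (u j))
  have hX0c : Continuous X0 :=
    Continuous.finset_inf'_apply _ fun j _ => continuous_euclNorm_matOf (u j)
  have hX0m : Measurable X0 := hX0c.measurable
  have hnm : ∀ d : ℕ, Measurable (euclNorm : (Fin d → ℝ) → ℝ) :=
    fun d => continuous_euclNorm.measurable
  have hnm1 := hnm n
  have hnm2 := hnm k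
  set X : (GordonIdx n k → ℝ) → ℝ := fun z =>
    X0 (fun p => z (.inl (.inl p))) + z (.inl (.inr ())) with hX
  set Y : (GordonIdx n k → ℝ) → ℝ := fun z =>
    euclNorm (fun i => z (.inr (.inl i))) - euclNorm (fun i => z (.inr (.inr i))) with hY
  have hXm : Measurable X := (hX0m.comp (by fun_prop)).add (by fun_prop)
  have hYm : Measurable Y := (hnm1.comp (by fun_prop)).sub (hnm2.comp (by fun_prop))
  have hXint : ∫⁻ z, ENNReal.ofReal (Real.exp (-t * X z)) ∂stdG (GordonIdx n k)
      = (∫⁻ x, ENNReal.ofReal (Real.exp (-t * X0 x)) ∂stdG (Fin n × Fin k))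
        * ENNReal.ofReal (Real.exp (t ^ 2 / 2)) := by
    have e1 := lintegral_stdG_sum (ι := Fin n × Fin k) (κ := Unit)
      (f := fun x => ENNReal.ofReal (Real.exp (-t * X0 x)))
      (g := fun x => ENNReal.ofReal (Real.exp (-t * x ()))) (by fun_prop) (by fun_prop)
    have e2 := lintegral_stdG_sum (ι := Fin n × Fin k ⊕ Unit) (κ := Fin n ⊕ Fin k)
      (f := fun x => ENNReal.ofReal (Real.exp (-t * X0 fun p => x (.inl p)))
        * ENNReal.ofReal (Real.exp (-t * x (.inr ()))))
      (g := fun _ => 1) (by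
        have : Measurable fun x : Fin n × Fin k ⊕ Unit → ℝ => X0 fun p => x (.inl p) :=
          hX0m.comp (by fun_prop)
        fun_prop) measurable_const
    rw [e1, lintegral_exp_unit, neg_sq, lintegral_one, measure_univ, mul_one] at e2
    rw [← e2]
    refine lintegral_congr fun z => ?_
    rw [mul_one, ← ENNReal.ofReal_mul (Real.exp_pos _).le, ← Real.exp_add, hX]
    ring_nf
  have hYint : ∫⁻ z, ENNReal.ofReal (Real.exp (-t * Y z)) ∂stdG (GordonIdx n k)
      ≤ ENNReal.ofReal (Real.exp (-t * (chiMean n - chiMean k) + t ^ 2)) := by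
    have e1 := lintegral_stdG_sum (ι := Fin n) (κ := Fin k)
      (f := fun x => ENNReal.ofReal (Real.exp (-t * euclNorm x)))
      (g := fun x => ENNReal.ofReal (Real.exp (t * euclNorm x))) (by fun_prop) (by fun_prop)
    have e2 := lintegral_stdG_sum (ι := Fin n × Fin k ⊕ Unit) (κ := Fin n ⊕ Fin k)
      (f := fun _ => 1)
      (g := fun x => ENNReal.ofReal (Real.exp (-t * euclNorm fun p => x (.inl p)))
        * ENNReal.ofReal (Real.exp (t * euclNorm fun p => x (.inr p))))
      measurable_const (by
        have h1 : Measurable fun x : Fin n ⊕ Fin k → ℝ => euclNorm fun p => x (.inl p) :=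
          hnm1.comp (by fun_prop)
        have h2 : Measurable fun x : Fin n ⊕ Fin k → ℝ => euclNorm fun p => x (.inr p) :=
          hnm2.comp (by fun_prop)
        fun_prop)
    rw [e1, lintegral_one, measure_univ, one_mul] at e2
    calc _ = _ := lintegral_congr fun z => by
          rw [one_mul, ← ENNReal.ofReal_mul (Real.exp_pos _).le, ← Real.exp_add, hY]
          ring_nf
      _ = _ := e2
      _ ≤ _ := mul_le_mul' (lintegral_exp_euclNorm_le (hk.trans hkn) (-t))
          (lintegral_exp_euclNorm_le hk t)
      _ = _ := by
          rw [← ENNReal.ofReal_mul (Real.exp_pos _).le, ← Real.exp_add]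
          ring_nf
  have hchi := sqrt_sub_sqrt_le_chiMean hk hkn
  set E : Set (Fin n × Fin k → ℝ) := {x | ∃ j, euclNorm ((matOf x).mulVec (u j)) < A} with hE
  -- the comparison of laws costs `2 * ε`, which is sent to `0` at the end
  have key : ∀ ε : ℝ, 0 < ε → stdG (Fin n × Fin k) E
      ≤ ENNReal.ofReal (Real.exp (t * (2 * ε) + -(t ^ 2 / 2))) := by
    intro ε hε
    have h1 := lintegral_exp_le_of_prob_le (stdG (GordonIdx n k)) hXm hYm (c := 2 * ε) ht
      fun α => by
        refine le_trans (measure_mono fun z hz => ?_) (gordon_prob_le u hu hε α)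
        obtain ⟨j, -, hj⟩ := Finset.exists_mem_eq_inf' Finset.univ_nonempty
          fun j => euclNorm ((matOf fun p => z (.inl (.inl p))).mulVec (u j))
        refine ⟨j, ?_⟩
        rw [← hj]
        exact hz
    rw [hXint] at h1
    have h2 := mul_meas_ge_le_lintegral (μ := stdG (Fin n × Fin k))
      (f := fun x => ENNReal.ofReal (Real.exp (-t * X0 x))) (by fun_prop)
      (ENNReal.ofReal (Real.exp (-t * A)))
    have h3 : stdG (Fin n × Fin k) E ≤ stdG (Fin n × Fin k)
        {x | ENNReal.ofReal (Real.exp (-t * A)) ≤ ENNReal.ofReal (Real.exp (-t * X0 x))} := by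
      refine measure_mono fun x hx => ENNReal.ofReal_le_ofReal (Real.exp_le_exp.2 ?_)
      obtain ⟨j, hj⟩ := hx
      have : X0 x ≤ euclNorm ((matOf x).mulVec (u j)) :=
        Finset.inf'_le _ (Finset.mem_univ j)
      nlinarith
    have h4 : ENNReal.ofReal (Real.exp (-t * A)) * stdG (Fin n × Fin k) E
        * ENNReal.ofReal (Real.exp (t ^ 2 / 2))
        ≤ ENNReal.ofReal (Real.exp (t * (2 * ε)))
          * ENNReal.ofReal (Real.exp (-t * (chiMean n - chiMean k) + t ^ 2)) :=
      (mul_le_mul_left ((mul_le_mul_right h3 _).trans h2) _).trans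
        (h1.trans (mul_le_mul_right hYint _))
    calc stdG (Fin n × Fin k) E
        = ENNReal.ofReal (Real.exp (t * A - t ^ 2 / 2))
          * (ENNReal.ofReal (Real.exp (-t * A)) * stdG (Fin n × Fin k) E
            * ENNReal.ofReal (Real.exp (t ^ 2 / 2))) := by
          rw [mul_right_comm, ← mul_assoc, ← ENNReal.ofReal_mul (Real.exp_pos _).le,
            ← Real.exp_add, ← ENNReal.ofReal_mul (Real.exp_pos _).le, ← Real.exp_add]
          ring_nf
          simp
      _ ≤ _ := mul_le_mul_right h4 _
      _ = ENNReal.ofReal (Real.exp (t * A - t ^ 2 / 2 + (t * (2 * ε)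
          + (-t * (chiMean n - chiMean k) + t ^ 2)))) := by
          rw [← ENNReal.ofReal_mul (Real.exp_pos _).le, ← Real.exp_add,
            ← ENNReal.ofReal_mul (Real.exp_pos _).le, ← Real.exp_add]
      _ ≤ _ := by
          refine ENNReal.ofReal_le_ofReal (Real.exp_le_exp.2 ?_)
          nlinarith
  have hlim : Filter.Tendsto
      (fun ε : ℝ => ENNReal.ofReal (Real.exp (t * (2 * ε) + -(t ^ 2 / 2))))
      (nhdsWithin 0 (Set.Ioi 0)) (nhds (ENNReal.ofReal (Real.exp (-(t ^ 2 / 2))))) := by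
    have hc : Continuous fun ε : ℝ =>
        ENNReal.ofReal (Real.exp (t * (2 * ε) + -(t ^ 2 / 2))) :=
      ENNReal.continuous_ofReal.comp (by fun_prop)
    have := (hc.tendsto 0).mono_left (nhdsWithin_le_nhds (s := Set.Ioi 0))
    simpa using this
  exact ge_of_tendsto hlim (by filter_upwards [self_mem_nhdsWithin] with ε hε using key ε hε)

/-- A countable family of unit vectors is an increasing union of finite ones. -/
lemma tail_seq {n k : ℕ} (hk : 1 ≤ k) (hkn : k ≤ n) {t : ℝ} (ht : 0 < t)
    (u : ℕ → Fin k → ℝ) (hu : ∀ j, euclNorm (u j) = 1) :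
    stdG (Fin n × Fin k) {x | ∃ j, euclNorm ((matOf x).mulVec (u j)) < √n - √k - t}
      ≤ ENNReal.ofReal (Real.exp (-(t ^ 2 / 2))) := by
  have hun : {x : Fin n × Fin k → ℝ | ∃ j, euclNorm ((matOf x).mulVec (u j)) < √n - √k - t}
      = ⋃ N : ℕ, {x | ∃ j : Fin N, euclNorm ((matOf x).mulVec (u j)) < √n - √k - t} := by
    ext x
    simp only [Set.mem_ofPred_eq, Set.mem_iUnion]
    exact ⟨fun ⟨j, hj⟩ => ⟨j + 1, ⟨j, j.lt_succ_self⟩, hj⟩, fun ⟨_, j, hj⟩ => ⟨j, hj⟩⟩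
  have hmono : Monotone fun N : ℕ => {x : Fin n × Fin k → ℝ |
      ∃ j : Fin N, euclNorm ((matOf x).mulVec (u j)) < √n - √k - t} :=
    fun N N' h x ⟨j, hj⟩ => ⟨Fin.castLE h j, hj⟩
  rw [hun, hmono.measure_iUnion]
  exact iSup_le fun N => tail_finite hk hkn ht (fun j : Fin N => u j) fun j => hu j

/-- The law of the matrix with variance `1 / n` is the image of the standard one under scaling. -/
lemma pi_gaussian_eq_map {n : ℕ} (ι : Type*) [Fintype ι] :
    (Measure.pi fun _ : ι => gaussianReal 0 (n : NNReal)⁻¹)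
      = (stdG ι).map fun x i => (√(n : ℝ))⁻¹ * x i := by
  have h : (gaussianReal 0 1).map (fun y => (√(n : ℝ))⁻¹ * y) = gaussianReal 0 (n : NNReal)⁻¹ := by
    rw [gaussianReal_map_const_mul]
    congr 1
    · simp
    · ext
      simp [inv_pow]
  have : ∀ i : ι, SigmaFinite ((gaussianReal 0 1).map fun y => (√(n : ℝ))⁻¹ * y) := by
    rw [h]; infer_instance
  unfold stdG
  rw [Measure.pi_map_pi (fun i => by fun_prop), h]

/-- Lemma 6 of the supplement (Davidson–Szarek): for a random `n × k` matrix with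
i.i.d. `N(0, 1/n)` entries and `n ≥ k ≥ 1`, for every `δ > 0`,
`P(σ_min(A) ≥ 1 - √(k/n) - δ) ≥ 1 - exp(-δ² n / 2)`. -/
theorem gaussian_sigmaMin_bound (n k : ℕ) (hk : 1 ≤ k) (hkn : k ≤ n)
    (δ : ℝ) (hδ : 0 < δ) :
    (Measure.pi fun _ : Fin n × Fin k => gaussianReal 0 (n : NNReal)⁻¹)
        {A : Fin n × Fin k → ℝ |
          sigmaMin (Matrix.of fun i j => A (i, j)) ≥ 1 - Real.sqrt ((k : ℝ) / n) - δ} ≥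
      ENNReal.ofReal (1 - Real.exp (-(δ ^ 2 * n / 2))) := by
  have hn : (0 : ℝ) < n := by exact_mod_cast hk.trans hkn
  have hsn : 0 < √(n : ℝ) := Real.sqrt_pos.2 hn
  set s : ℝ := 1 - √((k : ℝ) / n) - δ with hs
  have hthr : √(n : ℝ) * s = √n - √k - δ * √n := by
    rw [hs, Real.sqrt_div' _ hn.le]
    field_simp
  let S : Set (Fin k → ℝ) := {u | euclNorm u = 1}
  have hSne : Nonempty S :=
    ⟨Pi.single ⟨0, hk⟩ 1, by simp [S, euclNorm, Pi.single_apply]⟩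
  let u : ℕ → S := TopologicalSpace.denseSeq S
  set bad : Set (Fin n × Fin k → ℝ) :=
    {x | ∃ j, euclNorm ((matOf x).mulVec (u j)) < s} with hbad
  have hbadm : MeasurableSet bad := by
    rw [hbad, Set.ofPred_exists]
    exact MeasurableSet.iUnion fun j =>
      (isOpen_lt (continuous_euclNorm_matOf _) continuous_const).measurableSet
  -- only this inclusion is needed, so the measurability of `sigmaMin` plays no role
  have hsub : badᶜ ⊆ {A : Fin n × Fin k → ℝ | sigmaMin (Matrix.of fun i j => A (i, j)) ≥ s} := by
    intro x hx
    by_contra hlt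
    apply hx
    have hlt' : sInf {y : ℝ | ∃ v : Fin k → ℝ, euclNorm v = 1 ∧
        y = euclNorm ((matOf x).mulVec v)} < s := not_le.1 hlt
    obtain ⟨_, ⟨v, hv, rfl⟩, hvs⟩ := exists_lt_of_csInf_lt
      (by obtain ⟨v, hv⟩ := hSne; exact ⟨_, v, hv, rfl⟩) hlt'
    have hopen : IsOpen {w : S | euclNorm ((matOf x).mulVec (w : Fin k → ℝ)) < s} :=
      isOpen_lt (continuous_euclNorm.comp (by fun_prop)) continuous_const
    obtain ⟨j, hj⟩ := (TopologicalSpace.denseRange_denseSeq S).exists_mem_open hopen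
      ⟨⟨v, hv⟩, hvs⟩
    exact ⟨j, hj⟩
  have hprob : (Measure.pi fun _ : Fin n × Fin k => gaussianReal 0 (n : NNReal)⁻¹) bad
      ≤ ENNReal.ofReal (Real.exp (-(δ ^ 2 * n / 2))) := by
    rw [pi_gaussian_eq_map, Measure.map_apply (by fun_prop) hbadm]
    have h1 := tail_seq hk hkn (t := δ * √n) (by positivity) (fun j => u j) fun j => (u j).2
    rw [mul_pow, Real.sq_sqrt hn.le] at h1
    refine (measure_mono fun x hx => ?_).trans h1
    obtain ⟨j, hj⟩ := hx
    refine ⟨j, ?_⟩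
    rw [← hthr]
    have h2 : euclNorm ((matOf fun i => (√(n : ℝ))⁻¹ * x i).mulVec (u j))
        = (√(n : ℝ))⁻¹ * euclNorm ((matOf x).mulVec (u j)) := by
      have : (matOf fun i => (√(n : ℝ))⁻¹ * x i) = (√(n : ℝ))⁻¹ • matOf x := rfl
      rw [this, Matrix.smul_mulVec]
      simp only [euclNorm, Pi.smul_apply, smul_eq_mul, mul_pow, ← Finset.mul_sum]
      rw [Real.sqrt_mul (by positivity), Real.sqrt_sq (by positivity)]
    rw [h2, inv_mul_lt_iff₀ hsn] at hj
    exact hj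
  refine le_trans ?_ (measure_mono hsub)
  rw [prob_compl_eq_one_sub hbadm, ENNReal.ofReal_sub _ (Real.exp_pos _).le, ENNReal.ofReal_one]
  exact tsub_le_tsub_left hprob 1
end
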